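/- arXiv:1405.6618 — 3 statements merged into one kernel-verified Lean document; each statement's English description precedes it below -/
import Mathlib

section
/- For every nonnegative integer ℓ, nonnegative integer n, and complex number x such that no denominator vanishes: sum over k from 0 to n of ((3x)_k (2-ℓ-3x)_k (-n)_k)/(k! (3/2)_k (-1-3n)_k) * (3/4)^k equals ((3x-1)_ℓ/(6x-1)_ℓ) * sum over i from 0 to ℓ of (-1)^i * ((3x+i-1)/(3x-1))^2 * ((-ℓ)_i (6x-2)_i)/(i! (6x+ℓ-1)_i) * (((2+i)/3 + x)_n ((4-i)/3 - x)_n)/((2/3)_n (4/3)_n). (Generalization of Gosper's second identity with an extra integer parameter.) -/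
/-- Pochhammer symbol (rising factorial) `(a)_k`. -/
noncomputable def poch (a : ℂ) (k : ℕ) : ℂ := ∏ j ∈ Finset.range k, (a + j)

/-!
Put `a = 3x - 1` and `P_k(z) = (1 + z)_k (1 - z)_k = ∏_{j=1}^k (j² - z²)`.

The case `ℓ = 0` (Gosper's second identity) says that the polynomial `P_n(z/3)` has coefficients
`P_n(1/3) w_n(k)` in the basis `P_k(z)`, where `w_n(k)` is the part of the summand free of `x`.
Since `P_{n+1}(z/3) = ((n + 1)² - z²/9) P_n(z/3)` and `z² P_k = (k + 1)² P_k - P_{k+1}`, this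
amounts to a Pascal-type recurrence for these coefficients.

For general `ℓ`, the product `(1 + a)_k (1 - ℓ - a)_k` is a combination of `P_k(a), …, P_k(a + ℓ)`
with coefficients independent of `k`. Indeed the contiguous relation
`(2a + ℓ + 1) (1 + a)_k (-ℓ - a)_k
  = (a + ℓ) (1 + a)_k (1 - ℓ - a)_k + (a + 1) (2 + a)_k (-ℓ - a)_k`
builds the case `ℓ + 1` at `a` from the case `ℓ` at `a` and `a + 1`, and the resulting recurrence
for the coefficients is again of Pascal type. Interchanging the two sums reduces the theorem to the
case `ℓ = 0`.
-/

theorem sum_range_mul_of_pascal {R : Type*} [NonUnitalNonAssocSemiring R] {n : ℕ} {u v w : ℕ → R}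
    (zero : u 0 = v 0) (succ : ∀ k ≤ n, u (k + 1) = v (k + 1) + w k) (last : v (n + 1) = 0)
    (f : ℕ → R) :
    ∑ k ∈ Finset.range (n + 2), u k * f k =
      ∑ k ∈ Finset.range (n + 1), v k * f k + ∑ k ∈ Finset.range (n + 1), w k * f (k + 1) := by
  have extend : ∑ k ∈ Finset.range (n + 1), v k * f k = ∑ k ∈ Finset.range (n + 2), v k * f k := by
    rw [Finset.sum_range_succ _ (n + 1), last, zero_mul, add_zero]
  rw [extend, Finset.sum_range_succ' _ (n + 1), Finset.sum_range_succ' _ (n + 1), zero,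
    add_right_comm, ← Finset.sum_add_distrib]
  congr 1
  refine Finset.sum_congr rfl fun k hk => ?_
  rw [succ k (Finset.mem_range_succ_iff.1 hk), add_mul]

section Pochhammer

variable (a : ℂ) (k m : ℕ)

@[simp]
theorem poch_zero : poch a 0 = 1 :=
  Finset.prod_range_zero _

theorem poch_succ : poch a (k + 1) = poch a k * (a + k) :=
  Finset.prod_range_succ _ k

theorem poch_add : poch a (m + k) = poch a m * poch (a + m) k := by
  simp only [poch, Finset.prod_range_add, Nat.cast_add, add_assoc]

theorem poch_succ_left : poch a (k + 1) = a * poch (a + 1) k := by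
  rw [add_comm, poch_add, poch_succ, poch_zero, Nat.cast_zero, Nat.cast_one, one_mul, add_zero]

theorem poch_add_add_one : poch a (m + k + 1) = a * (poch (a + 1) m * poch (a + 1 + m) k) := by
  rw [poch_succ_left, poch_add]

theorem poch_mul_add_natCast : poch a k * (a + k) = a * poch (a + 1) k := by
  rw [← poch_succ, poch_succ_left]

theorem poch_neg_natCast : poch (-m) k = (-1) ^ k * (k.factorial * m.choose k) := by
  have factors : poch (-m) k = (-1) ^ k * ∏ j ∈ Finset.range k, (m - j : ℂ) := by
    simp only [poch, neg_add_eq_sub, ← neg_sub (m : ℂ), Finset.prod_neg, Finset.card_range]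
  rw [factors, ← descPochhammer_eval_eq_prod_range, descPochhammer_eval_eq_descFactorial,
    Nat.descFactorial_eq_factorial_mul_choose, Nat.cast_mul]

variable {a k m}

theorem poch_ne_zero_iff : poch a k ≠ 0 ↔ ∀ j < k, a + j ≠ 0 := by
  simp only [poch, Finset.prod_ne_zero_iff, Finset.mem_range]

theorem poch_add_natCast_ne_zero {i : ℕ} (h : poch a m ≠ 0) (hik : i + k ≤ m) :
    poch (a + i) k ≠ 0 := by
  obtain ⟨r, rfl⟩ := Nat.exists_eq_add_of_le hik
  rw [poch_add, poch_add] at h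
  exact right_ne_zero_of_mul (left_ne_zero_of_mul h)

end Pochhammer

/-- The even polynomial `(1 + z)_k (1 - z)_k = ∏_{j=1}^k (j² - z²)`. -/
noncomputable def symmPoch (z : ℂ) (k : ℕ) : ℂ := poch (1 + z) k * poch (1 - z) k

@[simp]
theorem symmPoch_zero (z : ℂ) : symmPoch z 0 = 1 := by
  rw [symmPoch, poch_zero, poch_zero, one_mul]

theorem symmPoch_succ (z : ℂ) (k : ℕ) :
    symmPoch z (k + 1) = ((k + 1) ^ 2 - z ^ 2) * symmPoch z k := by
  simp only [symmPoch, poch_succ]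
  ring

theorem symmPoch_one_third_ne_zero (n : ℕ) : symmPoch (1 / 3) n ≠ 0 := by
  induction n with
  | zero => simp
  | succ n ih =>
    have factors : ((n + 1) ^ 2 - (1 / 3) ^ 2 : ℂ) = (3 * n + 2) * (3 * n + 4) / 9 := by ring
    have h₂ : (3 * n + 2 : ℂ) ≠ 0 := by norm_cast
    have h₄ : (3 * n + 4 : ℂ) ≠ 0 := by norm_cast
    rw [symmPoch_succ, factors]
    exact mul_ne_zero (div_ne_zero (mul_ne_zero h₂ h₄) (by norm_num)) ih

/-- The part of Gosper's summand that does not depend on the free parameter. -/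
noncomputable def gosperWeight (n k : ℕ) : ℂ :=
  poch (-n) k / (k.factorial * poch (3 / 2) k * poch (-1 - 3 * n) k) * (3 / 4) ^ k

@[simp]
theorem gosperWeight_zero_right (n : ℕ) : gosperWeight n 0 = 1 := by
  simp [gosperWeight]

theorem gosperWeight_self_succ (n : ℕ) : gosperWeight n (n + 1) = 0 := by
  simp [gosperWeight, poch_succ]

theorem gosperWeight_succ_right (n k : ℕ) :
    gosperWeight n (k + 1) =
      gosperWeight n k * ((n - k) / ((k + 1) * (3 / 2 + k) * (3 * n + 1 - k)) * (3 / 4)) := by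
  have neg_factor : -1 - 3 * n + k = -(3 * n + 1 - k : ℂ) := by ring
  simp only [gosperWeight, poch_succ, Nat.factorial_succ, pow_succ, neg_factor]
  push_cast
  field_simp
  ring

theorem poch_neg_succ_succ (n k : ℕ) :
    poch (-1 - 3 * (n + 1)) (k + 1) * ((3 * n + 3 - k) * (3 * n + 2 - k)) =
      -((3 * n + 4) * (3 * (n + 1)) * (3 * n + 2)) * poch (-1 - 3 * n) k := by
  have drop_last : poch (-1 - 3 * (n + 1)) (k + 3) =
      poch (-1 - 3 * (n + 1)) (k + 1) * ((3 * n + 3 - k) * (3 * n + 2 - k)) := by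
    rw [poch_succ, poch_succ]
    push_cast
    ring
  have drop_first : poch (-1 - 3 * (n + 1)) (k + 3) =
      -((3 * n + 4) * (3 * (n + 1)) * (3 * n + 2)) * poch (-1 - 3 * n) k := by
    rw [poch_succ_left, poch_succ_left, poch_succ_left]
    ring_nf
  rw [← drop_last, drop_first]

theorem gosperWeight_succ_succ {n k : ℕ} (hk : k ≤ n) :
    gosperWeight (n + 1) (k + 1) =
      gosperWeight n k * ((3 * n + 3 - k) * (3 * n + 2 - k) /
        ((k + 1) * (3 / 2 + k) * (3 * n + 4) * (3 * n + 2)) / 4) := by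
  have numerator : poch (-(n + 1)) (k + 1) = -(n + 1) * poch (-n) k := by
    rw [poch_succ_left]
    ring_nf
  have hn : (n + 1 : ℂ) ≠ 0 := by norm_cast
  have hfirst : (3 * n + 3 - k : ℂ) ≠ 0 := sub_ne_zero.2 (by norm_cast; omega)
  have hlast : (3 * n + 2 - k : ℂ) ≠ 0 := sub_ne_zero.2 (by norm_cast; omega)
  have denominator := eq_div_of_mul_eq (mul_ne_zero hfirst hlast) (poch_neg_succ_succ n k)
  simp only [gosperWeight, Nat.cast_add_one, numerator, denominator, poch_succ, pow_succ,
    Nat.factorial_succ, Nat.cast_mul]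
  field_simp

theorem gosperWeight_pascal {n k : ℕ} (hk : k ≤ n) :
    ((n + 1) ^ 2 - (1 / 3) ^ 2) * gosperWeight (n + 1) (k + 1) =
      ((n + 1) ^ 2 - ((k + 2) / 3) ^ 2) * gosperWeight n (k + 1) + gosperWeight n k / 9 := by
  have h₁ : (k + 1 : ℂ) ≠ 0 := by norm_cast
  have h₂ : (3 + k * 2 : ℂ) ≠ 0 := by norm_cast; omega
  have h₃ : (n * 3 + 1 - k : ℂ) ≠ 0 := sub_ne_zero.2 (by norm_cast; omega)
  have h₄ : (n * 3 + 2 : ℂ) ≠ 0 := by norm_cast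
  have h₅ : (n * 3 + 4 : ℂ) ≠ 0 := by norm_cast
  rw [gosperWeight_succ_succ hk, gosperWeight_succ_right]
  field_simp
  ring

theorem symmPoch_div_three_eq_sum (z : ℂ) (n : ℕ) :
    symmPoch (z / 3) n =
      symmPoch (1 / 3) n * ∑ k ∈ Finset.range (n + 1), gosperWeight n k * symmPoch z k := by
  induction n with
  | zero => simp
  | succ n ih =>
    have pascal := sum_range_mul_of_pascal
      (u := fun k => ((n + 1) ^ 2 - (1 / 3) ^ 2) * gosperWeight (n + 1) k)
      (v := fun k => ((n + 1) ^ 2 - ((k + 1) / 3) ^ 2) * gosperWeight n k)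
      (w := fun k => gosperWeight n k / 9)
      (by simp) (fun k hk => by simpa [add_assoc, one_add_one_eq_two] using gosperWeight_pascal hk)
      (by simp [gosperWeight_self_succ]) (symmPoch z)
    calc symmPoch (z / 3) (n + 1)
        = symmPoch (1 / 3) n * ∑ k ∈ Finset.range (n + 1),
            ((n + 1) ^ 2 - (z / 3) ^ 2) * (gosperWeight n k * symmPoch z k) := by
          rw [symmPoch_succ, ih, ← Finset.mul_sum, mul_left_comm]
      _ = symmPoch (1 / 3) n * ∑ k ∈ Finset.range (n + 2),
            ((n + 1) ^ 2 - (1 / 3) ^ 2) * gosperWeight (n + 1) k * symmPoch z k := by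
          rw [pascal, ← Finset.sum_add_distrib]
          congr 1
          refine Finset.sum_congr rfl fun k _ => ?_
          rw [symmPoch_succ]
          ring
      _ = symmPoch (1 / 3) (n + 1) *
            ∑ k ∈ Finset.range (n + 2), gosperWeight (n + 1) k * symmPoch z k := by
          simp only [symmPoch_succ (1 / 3), mul_assoc, ← Finset.mul_sum]
          ring

theorem symmPoch_div_three_div (z : ℂ) (n : ℕ) :
    symmPoch (z / 3) n / symmPoch (1 / 3) n =
      ∑ k ∈ Finset.range (n + 1), gosperWeight n k * symmPoch z k := by
  rw [symmPoch_div_three_eq_sum, mul_div_cancel_left₀ _ (symmPoch_one_third_ne_zero n)]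

/-- The weight `C(ℓ, i) / (b + i)_{ℓ+1}` of the shift by `i`. At `b = 2a`, up to the sign
`(-1)^(ℓ-i)` and the factor `2 / ℓ!`, its product with `a + i` is the weight of the node `(a + i)²`
in the divided difference at `a², (a + 1)², …, (a + ℓ)²`. -/
noncomputable def shiftWeight (ℓ i : ℕ) (b : ℂ) : ℂ := ℓ.choose i / poch (b + i) (ℓ + 1)

theorem shiftWeight_self_succ (ℓ : ℕ) (b : ℂ) : shiftWeight ℓ (ℓ + 1) b = 0 := by
  simp [shiftWeight]

theorem shiftWeight_succ_zero {ℓ : ℕ} {b : ℂ} (h : b + ℓ + 1 ≠ 0) :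
    (b + ℓ + 1) * shiftWeight (ℓ + 1) 0 b = shiftWeight ℓ 0 b := by
  simp only [shiftWeight, Nat.choose_zero_right, Nat.cast_zero, add_zero, poch_succ _ (ℓ + 1),
    Nat.cast_add_one, ← add_assoc]
  field_simp

theorem shiftWeight_pascal {ℓ i : ℕ} {b : ℂ} (h : poch (b + (i + 1)) (ℓ + 2) ≠ 0) :
    (b + ℓ + 1) * shiftWeight (ℓ + 1) (i + 1) b =
      shiftWeight ℓ (i + 1) b + shiftWeight ℓ i (b + 2) := by
  have snoc := poch_succ (b + (i + 1)) (ℓ + 1)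
  rw [Nat.cast_add_one] at snoc
  have cons := poch_succ_left (b + (i + 1)) (ℓ + 1)
  rw [show b + (i + 1) + 1 = b + 2 + i by ring] at cons
  have snoc_ne := snoc ▸ h
  have cons_ne := cons ▸ h
  have choose_rec : (ℓ.choose (i + 1) : ℂ) * (i + 1) = ℓ.choose i * (ℓ - i) := by
    have := congrArg (Nat.cast (R := ℂ)) (Nat.add_one_mul_choose_eq ℓ i)
    rw [Nat.choose_succ_succ] at this
    push_cast at this
    linear_combination -this
  have inv_snoc : ℓ.choose (i + 1) / poch (b + (i + 1)) (ℓ + 1) =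
      ℓ.choose (i + 1) * (b + (i + 1) + (ℓ + 1)) / poch (b + (i + 1)) (ℓ + 2) := by
    rw [snoc, mul_div_mul_right _ _ (right_ne_zero_of_mul snoc_ne)]
  have inv_cons : ℓ.choose i / poch (b + 2 + i) (ℓ + 1) =
      (b + (i + 1)) * ℓ.choose i / poch (b + (i + 1)) (ℓ + 2) := by
    rw [cons, mul_div_mul_left _ _ (left_ne_zero_of_mul cons_ne)]
  simp only [shiftWeight, Nat.cast_add_one, inv_snoc, inv_cons, Nat.choose_succ_succ]
  rw [← add_div, ← mul_div_assoc]
  congr 1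
  push_cast
  linear_combination -choose_rec

/-- The combination `∑_{i=0}^ℓ C(ℓ, i) g(a + i) / (2a + i)_{ℓ+1}` of the shifts of `g`. -/
noncomputable def shiftSum (ℓ : ℕ) (a : ℂ) (g : ℂ → ℂ) : ℂ :=
  ∑ i ∈ Finset.range (ℓ + 1), shiftWeight ℓ i (2 * a) * g (a + i)

theorem shiftSum_succ {ℓ : ℕ} {a : ℂ} (h : poch (2 * a) (2 * ℓ + 3) ≠ 0) (g : ℂ → ℂ) :
    (2 * a + ℓ + 1) * shiftSum (ℓ + 1) a g = shiftSum ℓ a g + shiftSum ℓ (a + 1) g := by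
  have hfirst : 2 * a + ℓ + 1 ≠ 0 := by
    simpa [add_assoc] using poch_ne_zero_iff.1 h (ℓ + 1) (by omega)
  have hpascal (i : ℕ) (hi : i ≤ ℓ) : poch (2 * a + (i + 1)) (ℓ + 2) ≠ 0 := by
    simpa using poch_add_natCast_ne_zero (i := i + 1) (k := ℓ + 2) h (by omega)
  have pascal := sum_range_mul_of_pascal
    (u := fun i => (2 * a + ℓ + 1) * shiftWeight (ℓ + 1) i (2 * a))
    (v := fun i => shiftWeight ℓ i (2 * a)) (w := fun i => shiftWeight ℓ i (2 * a + 2))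
    (shiftWeight_succ_zero hfirst) (fun i hi => shiftWeight_pascal (hpascal i hi))
    (shiftWeight_self_succ ℓ (2 * a)) (fun i => g (a + i))
  simpa only [shiftSum, Finset.mul_sum, mul_assoc, mul_add_one, Nat.cast_add_one, add_assoc,
    add_comm (1 : ℂ)] using pascal

theorem poch_mul_poch_contiguous (a c : ℂ) (k : ℕ) :
    (2 * a + c + 1) * (poch (1 + a) k * poch (1 - (c + 1) - a) k) =
      (a + c) * (poch (1 + a) k * poch (1 - c - a) k) +
        (a + 1) * (poch (1 + (a + 1)) k * poch (1 - c - (a + 1)) k) := by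
  have ha : poch (1 + a) k * (1 + a + k) = (1 + a) * poch (1 + (a + 1)) k := by
    rw [poch_mul_add_natCast, add_assoc 1 a]
  have hc : poch (-(a + c)) k * (-(a + c) + k) = -(a + c) * poch (1 - c - a) k := by
    rw [poch_mul_add_natCast]
    ring_nf
  rw [show 1 - (c + 1) - a = -(a + c) by ring, show 1 - c - (a + 1) = -(a + c) by ring]
  linear_combination poch (-(a + c)) k * ha - poch (1 + a) k * hc

theorem mul_poch_mul_poch_eq_shiftSum {ℓ : ℕ} {a : ℂ} (h : poch (2 * a) (2 * ℓ + 1) ≠ 0)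
    (k : ℕ) :
    a * (poch (1 + a) k * poch (1 - ℓ - a) k) =
      2 * poch a ℓ * shiftSum ℓ a fun z => z ^ 2 * symmPoch z k := by
  induction ℓ generalizing a with
  | zero =>
    have ha : a ≠ 0 := by simpa using poch_ne_zero_iff.1 h 0 (by omega)
    simp only [shiftSum, shiftWeight, symmPoch, poch_succ, poch_zero, zero_add,
      Finset.sum_range_one, Nat.choose_self, Nat.cast_zero, Nat.cast_one, add_zero, sub_zero]
    field_simp
  | succ ℓ ih =>
    have h_init : poch (2 * a) (2 * ℓ + 1) ≠ 0 := by
      simpa using poch_add_natCast_ne_zero (i := 0) (k := 2 * ℓ + 1) h (by omega)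
    have h_tail : poch (2 * (a + 1)) (2 * ℓ + 1) ≠ 0 := by
      simpa [mul_add] using poch_add_natCast_ne_zero (i := 2) (k := 2 * ℓ + 1) h (by omega)
    have hfactor : 2 * a + ℓ + 1 ≠ 0 := by
      simpa [add_assoc] using poch_ne_zero_iff.1 h (ℓ + 1) (by omega)
    refine mul_left_cancel₀ hfactor ?_
    set g := fun z => z ^ 2 * symmPoch z k
    calc (2 * a + ℓ + 1) * (a * (poch (1 + a) k * poch (1 - (ℓ + 1 : ℕ) - a) k))
        = (a + ℓ) * (a * (poch (1 + a) k * poch (1 - ℓ - a) k)) +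
            a * ((a + 1) * (poch (1 + (a + 1)) k * poch (1 - ℓ - (a + 1)) k)) := by
          rw [mul_left_comm, Nat.cast_add_one, poch_mul_poch_contiguous]
          ring
      _ = 2 * (poch a ℓ * (a + ℓ)) * shiftSum ℓ a g +
            2 * (a * poch (a + 1) ℓ) * shiftSum ℓ (a + 1) g := by
          rw [ih h_init, ih h_tail]
          ring
      _ = 2 * poch a (ℓ + 1) * ((2 * a + ℓ + 1) * shiftSum (ℓ + 1) a g) := by
          rw [← poch_succ, ← poch_succ_left, ← mul_add, shiftSum_succ h]
      _ = (2 * a + ℓ + 1) * (2 * poch a (ℓ + 1) * shiftSum (ℓ + 1) a g) := mul_left_comm _ _ _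

theorem mul_shiftWeight {ℓ i : ℕ} {b : ℂ} (h : poch b (ℓ + i + 1) ≠ 0) :
    b * shiftWeight ℓ i b =
      (-1) ^ i * (poch (-ℓ) i * poch b i) /
        (i.factorial * (poch (b + 1) ℓ * poch (b + 1 + ℓ) i)) := by
  have split : poch b i * poch (b + i) (ℓ + 1) = b * (poch (b + 1) ℓ * poch (b + 1 + ℓ) i) := by
    rw [← poch_add, ← poch_add_add_one, add_left_comm, add_assoc]
  have hne := poch_add_add_one b i ℓ ▸ h
  have hden := right_ne_zero_of_mul hne
  have hlast := right_ne_zero_of_mul (split ▸ hne)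
  have hfact : (i.factorial : ℂ) ≠ 0 := Nat.cast_ne_zero.2 i.factorial_ne_zero
  have hsign : ((-1) ^ i * (-1) ^ i : ℂ) = 1 := by rw [← mul_pow]; simp
  rw [shiftWeight, poch_neg_natCast, mul_div_assoc', div_eq_div_iff hlast (mul_ne_zero hfact hden)]
  linear_combination -(i.factorial * ℓ.choose i : ℂ) * split -
    (i.factorial * ℓ.choose i * (poch b i * poch (b + i) (ℓ + 1)) : ℂ) * hsign

theorem two_mul_shiftSum_sq_mul_div {ℓ : ℕ} {a : ℂ} (h : poch (2 * a) (2 * ℓ + 1) ≠ 0)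
    (g : ℂ → ℂ) :
    2 * shiftSum ℓ a (fun z => z ^ 2 * g z) / a =
      (poch (2 * a + 1) ℓ)⁻¹ * ∑ i ∈ Finset.range (ℓ + 1), (-1) ^ i * ((a + i) / a) ^ 2 *
        (poch (-ℓ) i * poch (2 * a) i) / (i.factorial * poch (2 * a + 1 + ℓ) i) * g (a + i) := by
  have ha : a ≠ 0 := by simpa using poch_ne_zero_iff.1 h 0 (by omega)
  rw [shiftSum, Finset.mul_sum, Finset.sum_div, Finset.mul_sum]
  refine Finset.sum_congr rfl fun i hi => ?_
  have hweight : poch (2 * a) (ℓ + i + 1) ≠ 0 := by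
    have hi := Finset.mem_range_succ_iff.1 hi
    simpa using poch_add_natCast_ne_zero (i := 0) (k := ℓ + i + 1) h (by omega)
  calc 2 * (shiftWeight ℓ i (2 * a) * ((a + i) ^ 2 * g (a + i))) / a
      = 2 * a * shiftWeight ℓ i (2 * a) * (((a + i) / a) ^ 2 * g (a + i)) := by
        field_simp
    _ = _ := by
        rw [mul_shiftWeight hweight]
        ring

theorem mul_sum_gosperWeight_mul_poch {ℓ : ℕ} {a : ℂ} (h : poch (2 * a) (2 * ℓ + 1) ≠ 0)
    (n : ℕ) :
    a * ∑ k ∈ Finset.range (n + 1), gosperWeight n k * (poch (1 + a) k * poch (1 - ℓ - a) k) =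
      2 * poch a ℓ *
        shiftSum ℓ a fun z => z ^ 2 * (symmPoch (z / 3) n / symmPoch (1 / 3) n) := by
  have expand (k : ℕ) : a * (gosperWeight n k * (poch (1 + a) k * poch (1 - ℓ - a) k)) =
      2 * poch a ℓ * ∑ i ∈ Finset.range (ℓ + 1),
        shiftWeight ℓ i (2 * a) * ((a + i) ^ 2 * (gosperWeight n k * symmPoch (a + i) k)) := by
    rw [mul_left_comm, mul_poch_mul_poch_eq_shiftSum h, mul_left_comm, shiftSum, Finset.mul_sum]
    congr 1
    exact Finset.sum_congr rfl fun i _ => by ring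
  rw [Finset.mul_sum]
  simp only [expand, ← Finset.mul_sum]
  rw [Finset.sum_comm]
  simp only [shiftSum, ← Finset.mul_sum, symmPoch_div_three_div]

theorem gosper_second_extension (ℓ n : ℕ) (x : ℂ)
    (h3x : 3*x - 1 ≠ 0) (h6xℓ : poch (6*x - 1) ℓ ≠ 0)
    (hdeni : ∀ i ≤ ℓ, poch (6*x + ℓ - 1) i ≠ 0)
    (hden : ∀ k ≤ n, poch (3/2) k ≠ 0 ∧ poch (-1 - 3*n : ℂ) k ≠ 0)
    (h23 : poch (2/3) n ≠ 0) (h43 : poch (4/3) n ≠ 0) :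
    ∑ k ∈ Finset.range (n+1),
      (poch (3*x) k * poch (2 - ℓ - 3*x) k * poch (-(n : ℂ)) k) /
        ((Nat.factorial k : ℂ) * poch (3/2) k * poch (-1 - 3*n : ℂ) k) * (3/4 : ℂ)^k
      = poch (3*x - 1) ℓ / poch (6*x - 1) ℓ *
        ∑ i ∈ Finset.range (ℓ+1),
          (-1 : ℂ)^i * ((3*x + i - 1) / (3*x - 1))^2 *
            (poch (-(ℓ : ℂ)) i * poch (6*x - 2) i) /
            ((Nat.factorial i : ℂ) * poch (6*x + ℓ - 1) i) *
            ((poch ((2 + i)/3 + x) n * poch ((4 - i)/3 - x) n) /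
              (poch (2/3) n * poch (4/3) n)) := by
  have double : 2 * (3 * x - 1) = 6 * x - 2 := by ring
  have double_add_one : 6 * x - 2 + 1 = 6 * x - 1 := by ring
  have hpoch : poch (2 * (3 * x - 1)) (2 * ℓ + 1) ≠ 0 := by
    rw [two_mul ℓ, poch_add_add_one, double, double_add_one, sub_add_eq_add_sub, ← double]
    exact mul_ne_zero (mul_ne_zero two_ne_zero h3x) (mul_ne_zero h6xℓ (hdeni ℓ le_rfl))
  have ratio (i : ℕ) : symmPoch ((3 * x + i - 1) / 3) n / symmPoch (1 / 3) n =
      poch ((2 + i) / 3 + x) n * poch ((4 - i) / 3 - x) n / (poch (2 / 3) n * poch (4 / 3) n) := by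
    rw [symmPoch, symmPoch, mul_comm (poch (2 / 3) n)]
    congr! 3 <;> ring
  calc _ = ∑ k ∈ Finset.range (n + 1), gosperWeight n k *
          (poch (1 + (3 * x - 1)) k * poch (1 - ℓ - (3 * x - 1)) k) := by
        refine Finset.sum_congr rfl fun k _ => ?_
        rw [gosperWeight, add_sub_cancel, show 1 - ℓ - (3 * x - 1) = 2 - ℓ - 3 * x by ring]
        ring
    _ = poch (3 * x - 1) ℓ * (2 * (shiftSum ℓ (3 * x - 1) fun z =>
          z ^ 2 * (symmPoch (z / 3) n / symmPoch (1 / 3) n)) / (3 * x - 1)) := by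
        rw [← mul_div_cancel_left₀ (∑ k ∈ _, _) h3x, mul_sum_gosperWeight_mul_poch hpoch]
        ring
    _ = _ := by
        rw [two_mul_shiftSum_sq_mul_div hpoch, ← mul_assoc, ← div_eq_mul_inv]
        simp only [double, double_add_one, sub_add_eq_add_sub, ratio]
end

section
/- For a nonnegative integer ℓ, nonnegative integer n, and complex numbers q, x with no vanishing denominators: sum over k from 0 to n of (q^{-3n};q^3)_k * (x;q)_k (q^{-ℓ}/x;q)_k / ((q;q)_k (-1;q)_k (q^{1/2-ℓ};q)_k (-q^{1/2};q)_k (q^{-3n};q)_k) * q^k equals [(qx;q)_ℓ (q^{1/2}x;q)_ℓ / ((qx^2;q)_ℓ (q^{1/2};q)_ℓ)] times the sum over i from 0 to ℓ of q^{(ℓ+1/2)i} * (1+xq^i)/(2(1+x)) * ((q^{-ℓ};q)_i (x^2;q)_i)/((q;q)_i (x^2 q^{ℓ+1};q)_i) * [ ((q^{1+i}x;q^3)_n (q^{2-i}/x;q^3)_n)/((q;q^3)_n (q^2;q^3)_n) + ((q^{2+i}x;q^3)_n (q^{1-i}/x;q^3)_n)/((q;q^3)_n (q^2;q^3)_n)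 ]. -/
/-- q-Pochhammer symbol `(a; q)_k`. -/
noncomputable def qpoch (a q : ℂ) (k : ℕ) : ℂ := ∏ j ∈ Finset.range k, (1 - a * q ^ j)

/-!
Assume first that the parameters are generic. The case `ℓ = 0` is the average of two cubic sums
`∑ (q⁻³ⁿ; q³)_k (X; q)_k (Y; q)_k / ((q⁻³ⁿ; q)_k (q; q)_{2k}) q^k` with `XY = q`. With
`u = q³ⁿ`, such a sum satisfies a first-order recurrence in `n`: a Pascal-type rule for
`(q⁻³ⁿ; q³)_k / (q⁻³ⁿ; q)_k` distributes the `(n + 1)`-st sum over the terms of the `n`-th one,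
where the two contributions to the `k`-th term add up to `(1 - quX) (1 - quY)`, independently
of `k`.

For general `ℓ`, Rogers' terminating `₆φ₅` sum expands
`(x; q)_k (q^{-ℓ} / x; q)_k / (q^{1/2 - ℓ}; q)_k` in the products
`(x q^i; q)_k (q^{-i} / x; q)_k / (q^{1/2}; q)_k` with `i ≤ ℓ`, and every term of this expansion
is an instance of the case `ℓ = 0`.

Finally, both sides are continuous in `(q^{1/2}, x)` wherever the denominators do not vanish, and
generic parameters are dense.
-/

open Finset Filter Topology

/-! ### Powers of elements of infinite order -/

theorem zpow_injective_of_not_isOfFinOrder {G : Type*} [GroupWithZero G] {g : G} (hg : g ≠ 0)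
    (hg_ord : ¬IsOfFinOrder g) : Function.Injective fun j : ℤ => g ^ j := by
  lift g to Gˣ using hg.isUnit
  have hinj := injective_zpow_iff_not_isOfFinOrder.2 (mt Units.isOfFinOrder_val.2 hg_ord)
  exact fun i j hij => hinj (Units.ext (by simpa only [Units.val_zpow_eq_zpow_val] using hij))

theorem pow_sub_pow_ne_zero {K : Type*} [DivisionRing K] {q : K} (hq : q ≠ 0)
    (hq_ord : ¬IsOfFinOrder q) {i j : ℕ} (hij : i ≠ j) : q ^ i - q ^ j ≠ 0 := fun h => by
  have hzpow : q ^ (i : ℤ) = q ^ (j : ℤ) := mod_cast sub_eq_zero.1 h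
  exact hij (mod_cast zpow_injective_of_not_isOfFinOrder hq hq_ord hzpow)

/-! ### The q-Pochhammer symbol -/

@[simp]
theorem qpoch_zero (a q : ℂ) : qpoch a q 0 = 1 := prod_range_zero _

theorem qpoch_succ (a q : ℂ) (k : ℕ) : qpoch a q (k + 1) = qpoch a q k * (1 - a * q ^ k) :=
  prod_range_succ _ _

theorem qpoch_add (a q : ℂ) (m n : ℕ) :
    qpoch a q (m + n) = qpoch a q m * qpoch (a * q ^ m) q n := by
  simp only [qpoch, prod_range_add, pow_add, mul_assoc]

theorem qpoch_succ' (a q : ℂ) (k : ℕ) : qpoch a q (k + 1) = (1 - a) * qpoch (a * q) q k := by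
  rw [add_comm, qpoch_add, qpoch_succ, qpoch_zero, pow_zero, mul_one, one_mul, pow_one]

theorem qpoch_mul_qpoch_mul_pow_comm (a q : ℂ) (m n : ℕ) :
    qpoch a q m * qpoch (a * q ^ m) q n = qpoch a q n * qpoch (a * q ^ n) q m := by
  rw [← qpoch_add, add_comm, qpoch_add]

theorem one_sub_mul_qpoch_mul (a q : ℂ) (k : ℕ) :
    (1 - a) * qpoch (a * q) q k = qpoch a q k * (1 - a * q ^ k) := by
  rw [← qpoch_succ', qpoch_succ]

theorem qpoch_ne_zero {a q : ℂ} (h : ∀ j : ℕ, a * q ^ j ≠ 1) (k : ℕ) : qpoch a q k ≠ 0 :=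
  prod_ne_zero_iff.2 fun j _ => sub_ne_zero.2 (h j).symm

theorem qpoch_eq_zero {a q : ℂ} {j k : ℕ} (hjk : j < k) (h : a * q ^ j = 1) : qpoch a q k = 0 :=
  prod_eq_zero (mem_range.2 hjk) (by rw [h, sub_self])

theorem qpoch_div_pow_mul_qpoch_div_pow {a b q : ℂ} (hq : q ≠ 0) (hab : a * b = q) (k m : ℕ) :
    q ^ (k * m) * (qpoch (a / q ^ m) q k * qpoch (b / q ^ k) q m) =
      qpoch a q k * qpoch b q m := by
  induction m with
  | zero => simp
  | succ m ih =>
    have hshift := one_sub_mul_qpoch_mul (a / q ^ (m + 1)) q k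
    rw [show a / q ^ (m + 1) * q = a / q ^ m by rw [pow_succ]; field_simp] at hshift
    have hinv : b * q ^ m * (a / q ^ (m + 1)) = 1 := by
      rw [pow_succ]
      field_simp
      linear_combination hab
    have hcancel : q ^ k * (b / q ^ k) = b := by field_simp
    calc q ^ (k * (m + 1)) * (qpoch (a / q ^ (m + 1)) q k * qpoch (b / q ^ k) q (m + 1))
        = q ^ (k * m) * qpoch (a / q ^ (m + 1)) q k * qpoch (b / q ^ k) q m *
            (q ^ k - b * q ^ m) := by
          rw [qpoch_succ, mul_add_one, pow_add]
          linear_combination -(q ^ (k * m) * qpoch (a / q ^ (m + 1)) q k *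
            qpoch (b / q ^ k) q m * q ^ m) * hcancel
      _ = q ^ (k * m) * (qpoch (a / q ^ m) q k * qpoch (b / q ^ k) q m) * (1 - b * q ^ m) := by
          linear_combination q ^ (k * m) * qpoch (b / q ^ k) q m * (b * q ^ m * hshift +
            (qpoch (a / q ^ m) q k - q ^ k * qpoch (a / q ^ (m + 1)) q k) * hinv)
      _ = qpoch a q k * qpoch b q (m + 1) := by rw [ih, qpoch_succ, mul_assoc]

@[fun_prop]
theorem continuousAt_qpoch {X : Type*} [TopologicalSpace X] {a q : X → ℂ} {t : X} {k : ℕ}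
    (ha : ContinuousAt a t) (hq : ContinuousAt q t) :
    ContinuousAt (fun y => qpoch (a y) (q y) k) t := by
  have hfactor (j : ℕ) : ContinuousAt (fun y => 1 - a y * q y ^ j) t := by fun_prop
  exact tendsto_finsetProd _ fun j _ => hfactor j

/-! ### Rogers' terminating sum -/

/-- The part of the summand of Rogers' terminating very-well-poised `₆φ₅` series with upper
parameters `a, c, d, q^{-ℓ}` that depends neither on `ℓ` nor on the very-well-poised factor
`1 - a q^{2i}`. It is parametrized by `z = aq / (cd)`, so that `aq / c = dz` and `aq / d = cz`. -/
noncomputable def rogersWeight (q a c d z : ℂ) (i : ℕ) : ℂ :=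
  qpoch a q i * qpoch c q i * qpoch d q i /
    (qpoch q q i * qpoch (c * z) q i * qpoch (d * z) q i) * z ^ i

/-- The part of the summand of Rogers' terminating `₆φ₅` series that depends on `ℓ`, namely
`(q^{-ℓ}; q)_i q^{ℓi} / (a q^{ℓ+1}; q)_i`. -/
noncomputable def rogersKernel (q a : ℂ) (ℓ i : ℕ) : ℂ :=
  qpoch (q ^ ℓ)⁻¹ q i * q ^ (ℓ * i) / qpoch (a * q ^ (ℓ + 1)) q i

theorem rogersWeight_zero (q a c d z : ℂ) : rogersWeight q a c d z 0 = 1 := by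
  simp [rogersWeight]

theorem rogersWeight_succ (q a c d z : ℂ) (i : ℕ) :
    rogersWeight q a c d z (i + 1) = rogersWeight q a c d z i *
      ((1 - a * q ^ i) * (1 - c * q ^ i) * (1 - d * q ^ i) * z /
        ((1 - q * q ^ i) * (1 - c * z * q ^ i) * (1 - d * z * q ^ i))) := by
  simp only [rogersWeight, qpoch_succ, div_eq_mul_inv, mul_inv]
  ring

theorem rogersKernel_zero (q a : ℂ) (ℓ : ℕ) : rogersKernel q a ℓ 0 = 1 := by
  simp [rogersKernel]

theorem rogersKernel_succ_self {q : ℂ} (hq : q ≠ 0) (a : ℂ) (ℓ : ℕ) :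
    rogersKernel q a ℓ (ℓ + 1) = 0 := by
  rw [rogersKernel, qpoch_eq_zero ℓ.lt_succ_self (inv_mul_cancel₀ (pow_ne_zero ℓ hq)), zero_mul,
    zero_div]

theorem rogersKernel_succ_right {q : ℂ} (hq : q ≠ 0) (a : ℂ) (ℓ i : ℕ) :
    rogersKernel q a ℓ (i + 1) = rogersKernel q a ℓ i *
      ((q ^ ℓ - q ^ i) / (1 - a * q ^ (ℓ + 1) * q ^ i)) := by
  have h : (1 - (q ^ ℓ)⁻¹ * q ^ i) * q ^ ℓ = q ^ ℓ - q ^ i := by field_simp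
  rw [rogersKernel, rogersKernel, div_mul_div_comm, qpoch_succ, qpoch_succ, ← h]
  ring

theorem rogersKernel_succ_succ {q a : ℂ} (hq : q ≠ 0) {ℓ : ℕ} (ha : a * q ^ (ℓ + 1) ≠ 1) (i : ℕ) :
    rogersKernel q a (ℓ + 1) (i + 1) = rogersKernel q a ℓ i *
      (q ^ i * (q ^ (ℓ + 1) - 1) * (1 - a * q ^ (ℓ + 1)) /
        ((1 - a * q ^ (ℓ + 1) * q ^ i) * (1 - a * q ^ (ℓ + 1) * q ^ (i + 1)))) := by
  have hnum : qpoch (q ^ (ℓ + 1))⁻¹ q (i + 1) * q ^ (ℓ + 1) =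
      (q ^ (ℓ + 1) - 1) * qpoch (q ^ ℓ)⁻¹ q i := by
    rw [qpoch_succ', show (q ^ (ℓ + 1))⁻¹ * q = (q ^ ℓ)⁻¹ by rw [pow_succ]; field_simp]
    field_simp
  have hden : (1 - a * q ^ (ℓ + 1)) * qpoch (a * q ^ (ℓ + 1 + 1)) q (i + 1) =
      qpoch (a * q ^ (ℓ + 1)) q i *
        ((1 - a * q ^ (ℓ + 1) * q ^ i) * (1 - a * q ^ (ℓ + 1) * q ^ (i + 1))) := by
    rw [pow_succ q (ℓ + 1), ← mul_assoc, one_sub_mul_qpoch_mul, qpoch_succ, mul_assoc]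
  rw [rogersKernel, rogersKernel, div_mul_div_comm, ← hden,
    ← mul_div_mul_left _ (qpoch (a * q ^ (ℓ + 1 + 1)) q (i + 1)) (sub_ne_zero.2 ha.symm)]
  congr 1
  linear_combination (1 - a * q ^ (ℓ + 1)) * q ^ (ℓ * i + i) * hnum

section Rogers
variable {q a c d z : ℂ}

/-- Here `p` and `Q` stand for `q ^ ℓ` and `q ^ i`. -/
theorem rogers_certificate (hq : q ≠ 0) (h : a * q = c * d * z) (p Q : ℂ) :
    (1 - a * (Q * q) ^ 2) * ((1 - c * z * p) * (1 - d * z * p) * (Q * (p * q - 1)) -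
        (1 - z * p) * ((p - Q) * (1 - a * (p * q) * (Q * q)))) =
      z * p * (p - Q) * ((1 - a * (Q * q)) * (1 - c * (Q * q)) * (1 - d * (Q * q))) -
        p * (1 - q * Q) * (1 - c * z * Q) * (1 - d * z * Q) * (1 - a * (p * q) * (Q * q)) := by
  obtain rfl : a = c * d * z / q := by rw [← h, mul_div_cancel_right₀ _ hq]
  field_simp
  ring

theorem rogers_sum_telescope (hq : q ≠ 0) (hq_ord : ¬IsOfFinOrder q) (h : a * q = c * d * z)
    (ha : ∀ j : ℕ, a * q ^ (j + 1) ≠ 1) (hc : ∀ j : ℕ, c * z * q ^ j ≠ 1)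
    (hd : ∀ j : ℕ, d * z * q ^ j ≠ 1) (ℓ m : ℕ) :
    ∑ i ∈ range (m + 1), (1 - a * (q ^ i) ^ 2) * rogersWeight q a c d z i *
        ((1 - c * z * q ^ ℓ) * (1 - d * z * q ^ ℓ) * rogersKernel q a (ℓ + 1) i -
          (1 - a * q ^ (ℓ + 1)) * (1 - z * q ^ ℓ) * rogersKernel q a ℓ i) =
      z * q ^ ℓ * (1 - a * q ^ (ℓ + 1)) *
        ((1 - a * q ^ m) * (1 - c * q ^ m) * (1 - d * q ^ m)) / (1 - a * q ^ (ℓ + 1) * q ^ m) *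
          (rogersWeight q a c d z m * rogersKernel q a ℓ m) := by
  induction m with
  | zero =>
    simp only [zero_add, sum_range_one, rogersWeight_zero, rogersKernel_zero, pow_zero, mul_one]
    rw [mul_div_right_comm, mul_div_cancel_right₀ _ (sub_ne_zero.2 (ha ℓ).symm)]
    linear_combination (1 - a) * q ^ ℓ * (1 - z * q ^ ℓ) * h
  | succ m ih =>
    have hq_ne : 1 - q * q ^ m ≠ 0 := by
      rw [← pow_succ']
      exact sub_ne_zero.2 fun h => hq_ord (isOfFinOrder_iff_pow_eq_one.2 ⟨_, m.succ_pos, h.symm⟩)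
    have hc_ne := sub_ne_zero.2 (hc m).symm
    have hd_ne := sub_ne_zero.2 (hd m).symm
    have ha_ne (j : ℕ) : 1 - a * q ^ (ℓ + 1) * q ^ j ≠ 0 := by
      rw [mul_assoc, ← pow_add, add_right_comm]
      exact sub_ne_zero.2 (ha _).symm
    have ha_m := ha_ne m
    have ha_m' := ha_ne (m + 1)
    rw [sum_range_succ, ih, rogersWeight_succ, rogersKernel_succ_succ hq (ha ℓ),
      rogersKernel_succ_right hq]
    generalize rogersWeight q a c d z m = W
    generalize rogersKernel q a ℓ m = K
    have key := rogers_certificate hq h (q ^ ℓ) (q ^ m)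
    clear ih ha_ne hq_ord ha hc hd h hq
    rw [pow_succ q m, pow_succ q ℓ] at *
    generalize q ^ m = Q at *
    generalize q ^ ℓ = p at *
    generalize 1 - a * (p * q) * Q = A₀, 1 - a * (p * q) * (Q * q) = A₁, 1 - q * Q = B,
      1 - c * z * Q = C, 1 - d * z * Q = D at *
    field_simp
    linear_combination z * (1 - a * Q) * (1 - c * Q) * (1 - d * Q) * (1 - a * (p * q)) * W * K * key

theorem rogers_sum (hq : q ≠ 0) (hq_ord : ¬IsOfFinOrder q) (h : a * q = c * d * z)
    (ha : ∀ j : ℕ, a * q ^ (j + 1) ≠ 1) (hc : ∀ j : ℕ, c * z * q ^ j ≠ 1)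
    (hd : ∀ j : ℕ, d * z * q ^ j ≠ 1) (ℓ : ℕ) :
    ∑ i ∈ range (ℓ + 1),
        (1 - a * (q ^ i) ^ 2) * (rogersWeight q a c d z i * rogersKernel q a ℓ i) =
      (1 - a) * (qpoch (a * q) q ℓ * qpoch z q ℓ / (qpoch (c * z) q ℓ * qpoch (d * z) q ℓ)) := by
  induction ℓ with
  | zero => simp [rogersWeight_zero, rogersKernel_zero]
  | succ ℓ ih =>
    have htel := rogers_sum_telescope hq hq_ord h ha hc hd ℓ (ℓ + 1)
    have hrec : (1 - c * z * q ^ ℓ) * (1 - d * z * q ^ ℓ) *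
          ∑ i ∈ range (ℓ + 1 + 1),
            (1 - a * (q ^ i) ^ 2) * (rogersWeight q a c d z i * rogersKernel q a (ℓ + 1) i) =
        (1 - a * q ^ (ℓ + 1)) * (1 - z * q ^ ℓ) *
          ∑ i ∈ range (ℓ + 1 + 1),
            (1 - a * (q ^ i) ^ 2) * (rogersWeight q a c d z i * rogersKernel q a ℓ i) := by
      rw [← sub_eq_zero, mul_sum, mul_sum, ← sum_sub_distrib]
      rw [rogersKernel_succ_self hq, mul_zero, mul_zero] at htel
      refine Eq.trans (sum_congr rfl fun i _ => ?_) htel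
      ring
    nth_rw 2 [sum_range_succ] at hrec
    rw [rogersKernel_succ_self hq, mul_zero, mul_zero, add_zero, ih] at hrec
    have hc_ne := sub_ne_zero.2 (hc ℓ).symm
    have hd_ne := sub_ne_zero.2 (hd ℓ).symm
    refine mul_left_cancel₀ (mul_ne_zero hc_ne hd_ne) (hrec.trans ?_)
    simp only [qpoch_succ, pow_succ']
    generalize 1 - c * z * q ^ ℓ = C, 1 - d * z * q ^ ℓ = D at *
    field_simp

end Rogers

/-! ### The cubic sum -/

section Cubic
variable {q x y : ℂ} {n k : ℕ}

/-- The ratio `(q^{-3n}; q³)_k / (q^{-3n}; q)_k`, which plays the role of a binomial coefficient in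
the cubic sum. -/
noncomputable def cubicRatio (q : ℂ) (n k : ℕ) : ℂ :=
  qpoch (q ^ (3 * n))⁻¹ (q ^ 3) k / qpoch (q ^ (3 * n))⁻¹ q k

/-- The factor `(x; q)_k (y; q)_k q^k / (q; q)_{2k}` of the summand of the cubic sum. -/
noncomputable def cubicWeight (q x y : ℂ) (k : ℕ) : ℂ :=
  qpoch x q k * qpoch y q k / qpoch q q (2 * k) * q ^ k

theorem cubicRatio_zero (q : ℂ) (n : ℕ) : cubicRatio q n 0 = 1 := by
  simp [cubicRatio]

theorem cubicWeight_zero (q x y : ℂ) : cubicWeight q x y 0 = 1 := by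
  simp [cubicWeight]

theorem cubicRatio_succ_self (hq : q ≠ 0) (n : ℕ) : cubicRatio q n (n + 1) = 0 := by
  rw [cubicRatio, qpoch_eq_zero n.lt_succ_self, zero_div]
  rw [← pow_mul, inv_mul_cancel₀ (pow_ne_zero _ hq)]

theorem sub_mul_cubicRatio_succ_right (hq : q ≠ 0) (hq_ord : ¬IsOfFinOrder q) (hk : k ≤ n) :
    (q ^ (3 * n) - q ^ k) * cubicRatio q n (k + 1) =
      (q ^ (3 * n) - (q ^ k) ^ 3) * cubicRatio q n k := by
  obtain hn | hn := eq_or_ne (3 * n) k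
  · obtain ⟨rfl, rfl⟩ : n = 0 ∧ k = 0 := by omega
    simp
  have hne := pow_sub_pow_ne_zero hq hq_ord hn
  have hpow := pow_ne_zero (3 * n) hq
  rw [cubicRatio, cubicRatio, qpoch_succ, qpoch_succ, pow_right_comm]
  generalize q ^ (3 * n) = u, q ^ k = Q at *
  have hsub (z : ℂ) : 1 - u⁻¹ * z = (u - z) / u := by field_simp
  rw [hsub, hsub]
  generalize u - Q = A at *
  field_simp

theorem qpoch_cube_div_qpoch_succ {a : ℂ} (h : ∀ i ≤ k + 2, 1 - a * q ^ i ≠ 0) :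
    (1 - a * q) * (1 - a * q ^ 2) * (qpoch a (q ^ 3) (k + 1) / qpoch a q (k + 1)) =
      (1 - a * q ^ (k + 1)) * (1 - a * q ^ (k + 2)) *
        (qpoch (a * q ^ 3) (q ^ 3) k / qpoch (a * q ^ 3) q k) := by
  have hden : qpoch a q (k + 1) * (1 - a * q ^ (k + 1)) * (1 - a * q ^ (k + 2)) =
      (1 - a) * (1 - a * q) * (1 - a * q ^ 2) * qpoch (a * q ^ 3) q k := by
    rw [← qpoch_succ, ← qpoch_succ, show k + 2 + 1 = 3 + k by ring, qpoch_add]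
    simp only [qpoch_succ, qpoch_zero, pow_zero, pow_one, mul_one, one_mul]
  have h0 : 1 - a ≠ 0 := by simpa using h 0 (by omega)
  have h1 : 1 - a * q ≠ 0 := by simpa using h 1 (by omega)
  have h2 := h 2 (by omega)
  have hfst := h (k + 1) (by omega)
  have hsnd := h (k + 2) (by omega)
  rw [qpoch_succ' a (q ^ 3), eq_div_of_mul_eq hfst (eq_div_of_mul_eq hsnd hden)]
  generalize 1 - a * q ^ (k + 1) = A, 1 - a * q ^ (k + 2) = B, 1 - a * q ^ 2 = C,
    1 - a * q = D, 1 - a = E at *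
  field_simp

theorem mul_cubicRatio_succ_succ (hq : q ≠ 0) (hq_ord : ¬IsOfFinOrder q) (hk : k ≤ n) :
    (1 - q * q ^ (3 * n)) * (1 - q ^ 2 * q ^ (3 * n)) * cubicRatio q (n + 1) (k + 1) =
      (q * q ^ (3 * n) - q ^ k) * (q ^ 2 * q ^ (3 * n) - q ^ k) * cubicRatio q n k := by
  set a := (q ^ (3 * (n + 1)))⁻¹ with ha
  have hpow {i : ℕ} (hi : i ≠ 3 * (n + 1)) : 1 - a * q ^ i ≠ 0 := by
    rw [ha, inv_mul_eq_div, one_sub_div (pow_ne_zero _ hq)]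
    exact div_ne_zero (pow_sub_pow_ne_zero hq hq_ord hi.symm) (pow_ne_zero _ hq)
  have hshift : a * q ^ 3 = (q ^ (3 * n))⁻¹ := by rw [ha, mul_add_one, pow_add]; field_simp
  have hratio := qpoch_cube_div_qpoch_succ (k := k) fun i hi => hpow (show i ≠ _ by omega)
  rw [hshift] at hratio
  rw [cubicRatio, cubicRatio, ← ha]
  generalize qpoch a (q ^ 3) (k + 1) / qpoch a q (k + 1) = R',
    qpoch (q ^ (3 * n))⁻¹ (q ^ 3) k / qpoch (q ^ (3 * n))⁻¹ q k = R at *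
  have hu := pow_ne_zero (3 * n) hq
  have ha' : a = (q ^ 3 * q ^ (3 * n))⁻¹ := by rw [ha, mul_add_one, pow_add, mul_comm]
  rw [ha'] at hratio
  field_simp at hratio
  refine mul_left_cancel₀ (pow_ne_zero 3 hq) ?_
  linear_combination hratio

theorem cubicRatio_pascal (hq : q ≠ 0) (hq_ord : ¬IsOfFinOrder q) (hk : k ≤ n) :
    (1 - q * q ^ (3 * n)) * (1 - q ^ 2 * q ^ (3 * n)) * cubicRatio q (n + 1) (k + 1) =
      (1 - q * q ^ (3 * n) / q ^ (k + 1)) * (1 - q ^ 2 * q ^ (3 * n) * q ^ (k + 1)) *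
          cubicRatio q n (k + 1) +
        q ^ (3 * n) / q ^ k * ((1 - q ^ (2 * k + 1)) * (1 - q ^ (2 * k + 2))) *
          cubicRatio q n k := by
  have hright := sub_mul_cubicRatio_succ_right hq hq_ord hk
  rw [mul_cubicRatio_succ_succ hq hq_ord hk, pow_succ' q k,
    show q ^ (2 * k + 1) = q * (q ^ k) ^ 2 by ring,
    show q ^ (2 * k + 2) = q ^ 2 * (q ^ k) ^ 2 by ring]
  have hQ := pow_ne_zero k hq
  generalize q ^ (3 * n) = u, q ^ k = Q at *
  field_simp
  linear_combination (1 - q ^ 3 * u * Q) * hright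

theorem mul_cubicWeight_succ (hq : q ≠ 0) (hq_ord : ¬IsOfFinOrder q) (x y : ℂ) (k : ℕ) :
    (1 - q ^ (2 * k + 1)) * (1 - q ^ (2 * k + 2)) * cubicWeight q x y (k + 1) =
      q * ((1 - x * q ^ k) * (1 - y * q ^ k)) * cubicWeight q x y k := by
  have h1 : 1 - q ^ (2 * k + 1) ≠ 0 := by
    simpa using pow_sub_pow_ne_zero hq hq_ord (i := 0) (2 * k).succ_ne_zero.symm
  have h2 : 1 - q ^ (2 * k + 2) ≠ 0 := by
    simpa using pow_sub_pow_ne_zero hq hq_ord (i := 0) (2 * k + 1).succ_ne_zero.symm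
  rw [cubicWeight, cubicWeight, mul_add_one, qpoch_succ, qpoch_succ, qpoch_succ, qpoch_succ,
    ← pow_succ', ← pow_succ', pow_succ q k]
  generalize 1 - q ^ (2 * k + 1) = A, 1 - q ^ (2 * k + 2) = B at *
  field_simp

theorem cubic_sum_succ (hq : q ≠ 0) (hq_ord : ¬IsOfFinOrder q) (hxy : x * y = q) (n : ℕ) :
    (1 - q * q ^ (3 * n)) * (1 - q ^ 2 * q ^ (3 * n)) *
        ∑ k ∈ range (n + 2), cubicRatio q (n + 1) k * cubicWeight q x y k =
      (1 - q * q ^ (3 * n) * x) * (1 - q * q ^ (3 * n) * y) *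
        ∑ k ∈ range (n + 1), cubicRatio q n k * cubicWeight q x y k := by
  set u := q ^ (3 * n)
  set α : ℕ → ℂ := fun k => (1 - q * u / q ^ k) * (1 - q ^ 2 * u * q ^ k) *
    (cubicRatio q n k * cubicWeight q x y k) with hα
  set β : ℕ → ℂ := fun k => q * u / q ^ k * ((1 - x * q ^ k) * (1 - y * q ^ k)) *
    (cubicRatio q n k * cubicWeight q x y k) with hβ
  have hpascal (k : ℕ) (hk : k ∈ range (n + 1)) :
      (1 - q * u) * (1 - q ^ 2 * u) * (cubicRatio q (n + 1) (k + 1) * cubicWeight q x y (k + 1)) =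
        α (k + 1) + β k := by
    simp only [hα, hβ]
    linear_combination
      cubicWeight q x y (k + 1) * cubicRatio_pascal hq hq_ord (mem_range_succ_iff.1 hk) +
        u / q ^ k * cubicRatio q n k * mul_cubicWeight_succ hq hq_ord x y k
  have hα_last : α (n + 1) = 0 := by simp only [hα, cubicRatio_succ_self hq, zero_mul, mul_zero]
  have hα_zero : α 0 = (1 - q * u) * (1 - q ^ 2 * u) *
      (cubicRatio q (n + 1) 0 * cubicWeight q x y 0) := by
    simp only [hα, cubicRatio_zero, cubicWeight_zero, pow_zero, mul_one, div_one]
  have hexpand (k : ℕ) : α k + β k =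
      (1 - q * u * x) * (1 - q * u * y) * (cubicRatio q n k * cubicWeight q x y k) := by
    have := pow_ne_zero k hq
    simp only [hα, hβ]
    field_simp
    linear_combination cubicRatio q n k * cubicWeight q x y k * q ^ k *
      (q * u * q ^ k - q ^ 2 * u ^ 2) * hxy
  calc (1 - q * u) * (1 - q ^ 2 * u) *
        ∑ k ∈ range (n + 2), cubicRatio q (n + 1) k * cubicWeight q x y k
      = ∑ k ∈ range (n + 1), (α (k + 1) + β k) + α 0 := by
        rw [mul_sum, sum_range_succ', hα_zero, sum_congr rfl hpascal]
    _ = ∑ k ∈ range (n + 1), (α k + β k) := by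
        rw [sum_add_distrib, add_right_comm, ← sum_range_succ', sum_range_succ, hα_last, add_zero,
          sum_add_distrib]
    _ = _ := by rw [mul_sum, sum_congr rfl fun k _ => hexpand k]

theorem cubic_sum (hq : q ≠ 0) (hq_ord : ¬IsOfFinOrder q) (hxy : x * y = q) (n : ℕ) :
    ∑ k ∈ range (n + 1), cubicRatio q n k * cubicWeight q x y k =
      qpoch (q * x) (q ^ 3) n * qpoch (q * y) (q ^ 3) n /
        (qpoch q (q ^ 3) n * qpoch (q ^ 2) (q ^ 3) n) := by
  induction n with
  | zero => simp [cubicRatio_zero, cubicWeight_zero]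
  | succ n ih =>
    have h1 : 1 - q * q ^ (3 * n) ≠ 0 := by
      simpa [pow_succ'] using pow_sub_pow_ne_zero hq hq_ord (i := 0) (3 * n).succ_ne_zero.symm
    have h2 : 1 - q ^ 2 * q ^ (3 * n) ≠ 0 := by
      simpa [pow_add] using pow_sub_pow_ne_zero hq hq_ord (i := 0) (j := 2 + 3 * n) (by omega)
    have hrec := cubic_sum_succ hq hq_ord hxy n
    refine mul_left_cancel₀ (mul_ne_zero h1 h2) (hrec.trans ?_)
    simp only [ih, qpoch_succ, ← pow_mul, mul_right_comm q _ (q ^ (3 * n))]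
    generalize 1 - q * q ^ (3 * n) = A, 1 - q ^ 2 * q ^ (3 * n) = B at *
    field_simp

end Cubic

section Gosper
variable {q s x y : ℂ}

theorem qpoch_mul_qpoch_mul_one_add_pow (hs : s ^ 2 = q) (k : ℕ) :
    qpoch q q k * qpoch (-1) q k * qpoch s q k * qpoch (-s) q k * (1 + q ^ k) =
      2 * qpoch q q (2 * k) := by
  induction k with
  | zero =>
    simp only [qpoch_zero, mul_zero, pow_zero]
    norm_num
  | succ k ih =>
    rw [show 2 * (k + 1) = 2 * k + 1 + 1 by ring]
    simp only [qpoch_succ]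
    subst hs
    linear_combination (1 - s ^ 2 * (s ^ 2) ^ (2 * k)) * (1 - s ^ 2 * (s ^ 2) ^ (2 * k + 1)) * ih

theorem qpoch_mul_qpoch_add_qpoch_mul_qpoch (hxy : x * y = 1) (q : ℂ) (k : ℕ) :
    qpoch x q k * qpoch (q * y) q k + qpoch y q k * qpoch (q * x) q k =
      (1 + q ^ k) * (qpoch x q k * qpoch y q k) := by
  cases k with
  | zero =>
    simp only [qpoch_zero, pow_zero]
    norm_num
  | succ k =>
    rw [qpoch_succ' x, qpoch_succ' y, qpoch_succ, qpoch_succ, mul_comm x q, mul_comm y q]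
    linear_combination qpoch (q * x) q k * qpoch (q * y) q k * (q ^ (k + 1) - 1) * hxy

theorem gosper_sum (hq : q ≠ 0) (hq_ord : ¬IsOfFinOrder q) (hs : s ^ 2 = q) (hxy : x * y = 1)
    (n : ℕ) :
    ∑ k ∈ range (n + 1), cubicRatio q n k * (qpoch x q k * qpoch y q k /
        (qpoch q q k * qpoch (-1) q k * qpoch s q k * qpoch (-s) q k) * q ^ k) =
      (qpoch (q * x) (q ^ 3) n * qpoch (q ^ 2 * y) (q ^ 3) n /
          (qpoch q (q ^ 3) n * qpoch (q ^ 2) (q ^ 3) n) +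
        qpoch (q ^ 2 * x) (q ^ 3) n * qpoch (q * y) (q ^ 3) n /
          (qpoch q (q ^ 3) n * qpoch (q ^ 2) (q ^ 3) n)) / 2 := by
  have hsum_x := cubic_sum hq hq_ord (x := x) (y := q * y) (by linear_combination q * hxy) n
  have hsum_y := cubic_sum hq hq_ord (x := q * x) (y := y) (by linear_combination q * hxy) n
  rw [← mul_assoc, ← sq] at hsum_x hsum_y
  rw [← hsum_x, ← hsum_y, ← sum_add_distrib, sum_div]
  refine sum_congr rfl fun k _ => ?_
  have hadd : 1 + q ^ k ≠ 0 := by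
    obtain rfl | hk := k.eq_zero_or_pos
    · norm_num
    · refine fun h => hq_ord (isOfFinOrder_iff_pow_eq_one.2 ⟨k * 2, by omega, ?_⟩)
      rw [pow_mul, eq_neg_of_add_eq_zero_right h, neg_one_sq]
  have hdup := qpoch_mul_qpoch_mul_one_add_pow hs k
  rw [eq_div_of_mul_eq hadd hdup, div_div_eq_mul_div, cubicWeight, cubicWeight]
  linear_combination -(cubicRatio q n k * q ^ k / (2 * qpoch q q (2 * k))) *
    qpoch_mul_qpoch_add_qpoch_mul_qpoch hxy q k

end Gosper

/-! ### The expansion in the parameter `ℓ` -/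

/-- Parameters `q`, `s = q^{1/2}` and `x` for which no denominator occurring in the derivation
vanishes. Negative exponents `j` are included because reflecting `(x⁻¹; q)_k` produces
them. -/
structure IsGeneric (q s x : ℂ) : Prop where
  s_sq : s ^ 2 = q
  s_ne_zero : s ≠ 0
  x_ne_zero : x ≠ 0
  not_isOfFinOrder_s : ¬IsOfFinOrder s
  x_sq_mul_zpow_ne_one : ∀ j : ℤ, x ^ 2 * q ^ j ≠ 1

namespace IsGeneric
variable {q s x : ℂ}

theorem q_ne_zero (h : IsGeneric q s x) : q ≠ 0 := h.s_sq ▸ pow_ne_zero 2 h.s_ne_zero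

theorem not_isOfFinOrder_q (h : IsGeneric q s x) : ¬IsOfFinOrder q :=
  fun hq => h.not_isOfFinOrder_s ((h.s_sq ▸ hq).of_pow two_ne_zero)

theorem s_zpow_ne_one (h : IsGeneric q s x) {j : ℤ} (hj : j ≠ 0) : s ^ j ≠ 1 := fun hsj =>
  hj <| zpow_injective_of_not_isOfFinOrder h.s_ne_zero h.not_isOfFinOrder_s <|
    hsj.trans (zpow_zero s).symm

theorem s_div_pow_mul_pow_ne_one (h : IsGeneric q s x) (ℓ j : ℕ) : s / q ^ ℓ * q ^ j ≠ 1 :=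
  fun hj => h.s_zpow_ne_one (show 1 + 2 * (j - ℓ : ℤ) ≠ 0 by omega) <| by
    rw [zpow_one_add₀ h.s_ne_zero, zpow_mul, zpow_ofNat, h.s_sq, zpow_sub₀ h.q_ne_zero, ← hj,
      zpow_natCast, zpow_natCast, mul_div_assoc', div_mul_eq_mul_div]

theorem s_mul_pow_ne_one (h : IsGeneric q s x) (j : ℕ) : s * q ^ j ≠ 1 := by
  simpa only [pow_zero, div_one] using h.s_div_pow_mul_pow_ne_one 0 j

theorem x_mul_s_zpow_ne_one (h : IsGeneric q s x) (j : ℤ) : x * s ^ j ≠ 1 := fun hj =>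
  h.x_sq_mul_zpow_ne_one j <| by
    rw [← h.s_sq, ← zpow_ofNat s 2, ← zpow_mul, mul_comm 2, zpow_mul, zpow_ofNat, ← mul_pow, hj,
      one_pow]

theorem x_mul_pow_ne_one (h : IsGeneric q s x) (j : ℕ) : x * q ^ j ≠ 1 := fun hj =>
  h.x_mul_s_zpow_ne_one (2 * j) <| by
    rw [zpow_mul, zpow_ofNat, h.s_sq, zpow_natCast, hj]

theorem s_mul_x_mul_pow_ne_one (h : IsGeneric q s x) (j : ℕ) : s * x * q ^ j ≠ 1 := fun hj =>
  h.x_mul_s_zpow_ne_one (1 + 2 * j) <| by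
    rw [zpow_one_add₀ h.s_ne_zero, zpow_mul, zpow_ofNat, h.s_sq, zpow_natCast, ← hj, ← mul_assoc,
      mul_comm x]

theorem q_mul_x_div_pow_mul_pow_ne_one (h : IsGeneric q s x) (k j : ℕ) :
    q * x / q ^ k * q ^ j ≠ 1 := fun hj =>
  h.x_mul_s_zpow_ne_one (2 * (1 + j - k)) <| by
    rw [zpow_mul, zpow_ofNat, h.s_sq, zpow_sub₀ h.q_ne_zero, zpow_one_add₀ h.q_ne_zero, ← hj,
      zpow_natCast, zpow_natCast]
    ring

theorem x_sq_mul_pow_ne_one (h : IsGeneric q s x) (j : ℕ) : x ^ 2 * q ^ j ≠ 1 :=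
  mod_cast h.x_sq_mul_zpow_ne_one j

theorem one_sub_x_sq_ne_zero (h : IsGeneric q s x) : 1 - x ^ 2 ≠ 0 :=
  sub_ne_zero.2 fun hx => h.x_sq_mul_pow_ne_one 0 <| by rw [pow_zero, mul_one, hx]

end IsGeneric

section Connection
variable {q s x : ℂ}

/-- The coefficients of the expansion of `(x; q)_k (q^{-ℓ} / x; q)_k / (q^{1/2 - ℓ}; q)_k` in the
products `(x q^i; q)_k (q^{-i} / x; q)_k / (q^{1/2}; q)_k`, up to a factor not depending
on `i`; here `s = q^{1/2}`. -/
noncomputable def connectionCoeff (q s x : ℂ) (ℓ i : ℕ) : ℂ :=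
  q ^ (ℓ * i) * s ^ i * ((1 + x * q ^ i) / (1 + x)) *
    (qpoch (q ^ ℓ)⁻¹ q i * qpoch (x ^ 2) q i) / (qpoch q q i * qpoch (x ^ 2 * q ^ (ℓ + 1)) q i)

theorem one_add_mul_qpoch_mul_qpoch (h : IsGeneric q s x) (i k : ℕ) :
    (1 + x * q ^ i) / (1 + x) * (qpoch (x * q ^ i) q k * qpoch (x⁻¹ / q ^ i) q k) =
      qpoch x q k * qpoch x⁻¹ q k * ((1 - x ^ 2 * (q ^ i) ^ 2) / (1 - x ^ 2)) *
        (qpoch (x * q ^ k) q i / (q ^ (k * i) * qpoch (q * x / q ^ k) q i)) := by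
  have hshift := qpoch_mul_qpoch_mul_pow_comm x q i k
  have hreflect := qpoch_div_pow_mul_qpoch_div_pow h.q_ne_zero
    (show x⁻¹ * (q * x) = q by have := h.x_ne_zero; field_simp) k i
  have hquot := one_sub_mul_qpoch_mul x q i
  rw [mul_comm x q] at hquot
  have hpow := pow_ne_zero (k * i) h.q_ne_zero
  have hx_ne := qpoch_ne_zero h.x_mul_pow_ne_one i
  have hqx_ne := qpoch_ne_zero (h.q_mul_x_div_pow_mul_pow_ne_one k) i
  have hfactor : 1 - x ^ 2 = (1 - x) * (1 + x) := by ring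
  obtain ⟨hx1, hx2⟩ := mul_ne_zero_iff.1 (hfactor ▸ h.one_sub_x_sq_ne_zero)
  rw [hfactor]
  generalize qpoch (x * q ^ i) q k = A, qpoch (x⁻¹ / q ^ i) q k = B,
    qpoch (x * q ^ k) q i = C, qpoch (q * x / q ^ k) q i = D, qpoch (q * x) q i = E,
    qpoch x q i = F, qpoch x⁻¹ q k = G, q ^ (k * i) = T at *
  field_simp
  refine mul_left_cancel₀ hx_ne ?_
  linear_combination (1 + x * q ^ i) * (1 - x) * B * T * D * hshift +
    (1 + x * q ^ i) * (1 - x) * qpoch x q k * C * hreflect +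
    (1 + x * q ^ i) * qpoch x q k * G * C * hquot

theorem connectionCoeff_mul_qpoch (h : IsGeneric q s x) (ℓ k i : ℕ) :
    connectionCoeff q s x ℓ i * (qpoch (x * q ^ i) q k * qpoch (x⁻¹ / q ^ i) q k) =
      qpoch x q k * qpoch x⁻¹ q k / (1 - x ^ 2) *
        ((1 - x ^ 2 * (q ^ i) ^ 2) * (rogersWeight q (x ^ 2) (x * q ^ k) (s * x) (s / q ^ k) i *
          rogersKernel q (x ^ 2) ℓ i)) := by
  have hq := h.q_ne_zero
  have hcz : x * q ^ k * (s / q ^ k) = s * x := by field_simp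
  have hdz : s * x * (s / q ^ k) = q * x / q ^ k := by rw [← h.s_sq]; ring
  have hcancel : qpoch (x ^ 2) q i * qpoch (x * q ^ k) q i * qpoch (s * x) q i /
        (qpoch q q i * qpoch (s * x) q i * qpoch (q * x / q ^ k) q i) =
      qpoch (x ^ 2) q i * qpoch (x * q ^ k) q i / (qpoch q q i * qpoch (q * x / q ^ k) q i) := by
    rw [mul_right_comm (qpoch q q i),
      mul_div_mul_right _ _ (qpoch_ne_zero h.s_mul_x_mul_pow_ne_one i)]
  rw [connectionCoeff, rogersWeight, rogersKernel, hcz, hdz, hcancel, div_pow, ← pow_mul]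
  linear_combination q ^ (ℓ * i) * s ^ i * (qpoch (q ^ ℓ)⁻¹ q i * qpoch (x ^ 2) q i) /
    (qpoch q q i * qpoch (x ^ 2 * q ^ (ℓ + 1)) q i) * one_add_mul_qpoch_mul_qpoch h i k

theorem sum_connectionCoeff_mul_qpoch (h : IsGeneric q s x) (ℓ k : ℕ) :
    ∑ i ∈ range (ℓ + 1),
        connectionCoeff q s x ℓ i * (qpoch (x * q ^ i) q k * qpoch (x⁻¹ / q ^ i) q k) =
      qpoch x q k * qpoch x⁻¹ q k * (qpoch (q * x ^ 2) q ℓ * qpoch (s / q ^ k) q ℓ /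
        (qpoch (s * x) q ℓ * qpoch (q * x / q ^ k) q ℓ)) := by
  have hq := h.q_ne_zero
  have hcz : x * q ^ k * (s / q ^ k) = s * x := by field_simp
  have hdz : s * x * (s / q ^ k) = q * x / q ^ k := by rw [← h.s_sq]; ring
  have hrogers := rogers_sum (a := x ^ 2) (c := x * q ^ k) (d := s * x) (z := s / q ^ k) (ℓ := ℓ)
    hq h.not_isOfFinOrder_q (by rw [mul_right_comm, hcz, ← h.s_sq]; ring)
    (fun j => h.x_sq_mul_pow_ne_one (j + 1)) (hcz ▸ h.s_mul_x_mul_pow_ne_one)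
    (hdz ▸ h.q_mul_x_div_pow_mul_pow_ne_one k)
  simp_rw [connectionCoeff_mul_qpoch h]
  rw [← mul_sum, hrogers, hcz, hdz, mul_comm (x ^ 2) q, ← mul_assoc,
    div_mul_cancel₀ _ h.one_sub_x_sq_ne_zero]

theorem connection_formula (h : IsGeneric q s x) (ℓ k : ℕ) :
    qpoch x q k * qpoch (x⁻¹ / q ^ ℓ) q k / qpoch (s / q ^ ℓ) q k =
      qpoch (q * x) q ℓ * qpoch (s * x) q ℓ / (qpoch (q * x ^ 2) q ℓ * qpoch s q ℓ) *
        ∑ i ∈ range (ℓ + 1), connectionCoeff q s x ℓ i *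
          (qpoch (x * q ^ i) q k * qpoch (x⁻¹ / q ^ i) q k / qpoch s q k) := by
  have hreflect_x := qpoch_div_pow_mul_qpoch_div_pow h.q_ne_zero
    (show x⁻¹ * (q * x) = q by have := h.x_ne_zero; field_simp) k ℓ
  have hreflect_s := qpoch_div_pow_mul_qpoch_div_pow h.q_ne_zero
    (show s * s = q by rw [← h.s_sq, sq]) k ℓ
  have hs_k := qpoch_ne_zero h.s_mul_pow_ne_one k
  have hs_ℓ := qpoch_ne_zero h.s_mul_pow_ne_one ℓ
  have hs_div := qpoch_ne_zero (h.s_div_pow_mul_pow_ne_one ℓ) k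
  have hsx := qpoch_ne_zero h.s_mul_x_mul_pow_ne_one ℓ
  have hqx := qpoch_ne_zero (h.q_mul_x_div_pow_mul_pow_ne_one k) ℓ
  have hqxx : qpoch (q * x ^ 2) q ℓ ≠ 0 := qpoch_ne_zero (fun j => by
    rw [mul_comm q, mul_assoc, ← pow_succ']
    exact h.x_sq_mul_pow_ne_one (j + 1)) ℓ
  have hpow := pow_ne_zero (k * ℓ) h.q_ne_zero
  simp_rw [← mul_div_assoc]
  rw [← sum_div, sum_connectionCoeff_mul_qpoch h]
  generalize qpoch x q k = X, qpoch x⁻¹ q k = Y, qpoch (x⁻¹ / q ^ ℓ) q k = Y', qpoch s q k = S,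
    qpoch s q ℓ = S', qpoch (s / q ^ ℓ) q k = S₁, qpoch (s / q ^ k) q ℓ = S₂,
    qpoch (s * x) q ℓ = P, qpoch (q * x / q ^ k) q ℓ = R, qpoch (q * x ^ 2) q ℓ = M,
    qpoch (q * x) q ℓ = N, q ^ (k * ℓ) = T at *
  field_simp
  refine mul_left_cancel₀ hpow ?_
  linear_combination X * S * S' * hreflect_x - X * N * Y * hreflect_s

end Connection

/-- The left-hand side of the extended Gosper-type identity, with `s = q^{1/2}`. -/
noncomputable def gosperLhs (ℓ n : ℕ) (q x s : ℂ) : ℂ :=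
  ∑ k ∈ range (n + 1),
    qpoch (q ^ (-(3 * n : ℤ))) (q ^ 3) k * (qpoch x q k * qpoch (q ^ (-(ℓ : ℤ)) / x) q k) /
      (qpoch q q k * qpoch (-1) q k * qpoch (s * q ^ (-(ℓ : ℤ))) q k * qpoch (-s) q k *
        qpoch (q ^ (-(3 * n : ℤ))) q k) * q ^ k

/-- The right-hand side of the extended Gosper-type identity, with `s = q^{1/2}`. -/
noncomputable def gosperRhs (ℓ n : ℕ) (q x s : ℂ) : ℂ :=
  qpoch (q * x) q ℓ * qpoch (s * x) q ℓ / (qpoch (q * x ^ 2) q ℓ * qpoch s q ℓ) *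
    ∑ i ∈ range (ℓ + 1),
      q ^ (ℓ * i) * s ^ i * ((1 + x * q ^ i) / (2 * (1 + x))) *
        (qpoch (q ^ (-(ℓ : ℤ))) q i * qpoch (x ^ 2) q i) /
        (qpoch q q i * qpoch (x ^ 2 * q ^ (ℓ + 1)) q i) *
        (qpoch (q ^ (1 + i) * x) (q ^ 3) n * qpoch (q ^ (2 - i : ℤ) / x) (q ^ 3) n /
            (qpoch q (q ^ 3) n * qpoch (q ^ 2) (q ^ 3) n) +
          qpoch (q ^ (2 + i) * x) (q ^ 3) n * qpoch (q ^ (1 - i : ℤ) / x) (q ^ 3) n /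
            (qpoch q (q ^ 3) n * qpoch (q ^ 2) (q ^ 3) n))

theorem IsGeneric.gosperLhs_eq_sum_connectionCoeff {q s x : ℂ} (h : IsGeneric q s x) (ℓ n : ℕ) :
    gosperLhs ℓ n q x s =
      qpoch (q * x) q ℓ * qpoch (s * x) q ℓ / (qpoch (q * x ^ 2) q ℓ * qpoch s q ℓ) *
        ∑ i ∈ range (ℓ + 1), connectionCoeff q s x ℓ i *
          ∑ k ∈ range (n + 1), cubicRatio q n k *
            (qpoch (x * q ^ i) q k * qpoch (x⁻¹ / q ^ i) q k /
              (qpoch q q k * qpoch (-1) q k * qpoch s q k * qpoch (-s) q k) * q ^ k) := by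
  have hthree : q ^ (-(3 * n : ℤ)) = (q ^ (3 * n))⁻¹ := by
    rw [zpow_neg]
    exact_mod_cast rfl
  have hℓ : q ^ (-(ℓ : ℤ)) = (q ^ ℓ)⁻¹ := by rw [zpow_neg, zpow_natCast]
  have hterm (k : ℕ) : qpoch (q ^ (3 * n))⁻¹ (q ^ 3) k *
        (qpoch x q k * qpoch ((q ^ ℓ)⁻¹ / x) q k) /
        (qpoch q q k * qpoch (-1) q k * qpoch (s * (q ^ ℓ)⁻¹) q k * qpoch (-s) q k *
          qpoch (q ^ (3 * n))⁻¹ q k) * q ^ k =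
      cubicRatio q n k / (qpoch q q k * qpoch (-1) q k * qpoch (-s) q k) * q ^ k *
        (qpoch x q k * qpoch (x⁻¹ / q ^ ℓ) q k / qpoch (s / q ^ ℓ) q k) := by
    rw [cubicRatio, ← div_eq_mul_inv, inv_div_comm x]
    ring
  simp_rw [gosperLhs, hthree, hℓ, hterm, connection_formula h, mul_sum]
  rw [sum_comm]
  refine sum_congr rfl fun i _ => sum_congr rfl fun k _ => ?_
  ring

theorem IsGeneric.gosperLhs_eq_gosperRhs {q s x : ℂ} (h : IsGeneric q s x) (ℓ n : ℕ) :
    gosperLhs ℓ n q x s = gosperRhs ℓ n q x s := by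
  have hq := h.q_ne_zero
  have hℓ : q ^ (-(ℓ : ℤ)) = (q ^ ℓ)⁻¹ := by rw [zpow_neg, zpow_natCast]
  rw [h.gosperLhs_eq_sum_connectionCoeff, gosperRhs]
  congr 1
  refine sum_congr rfl fun i _ => ?_
  have hxy : x * q ^ i * (x⁻¹ / q ^ i) = 1 := by
    have := h.x_ne_zero
    field_simp
  have hone : q ^ (1 - i : ℤ) / x = q * (x⁻¹ / q ^ i) := by
    rw [zpow_sub₀ hq, zpow_natCast, zpow_one]
    ring
  have htwo : q ^ (2 - i : ℤ) / x = q ^ 2 * (x⁻¹ / q ^ i) := by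
    rw [zpow_sub₀ hq, zpow_natCast, zpow_ofNat]
    ring
  have hhalf : (1 + x * q ^ i) / (2 * (1 + x)) = (1 + x * q ^ i) / (1 + x) / 2 := by
    rw [mul_comm 2, div_div]
  rw [gosper_sum hq h.not_isOfFinOrder_q h.s_sq hxy, connectionCoeff, hone, htwo, hℓ,
    show q * (x * q ^ i) = q ^ (1 + i) * x by ring,
    show q ^ 2 * (x * q ^ i) = q ^ (2 + i) * x by ring, hhalf]
  ring

/-! ### Removing genericity -/

theorem continuousAt_gosperLhs {ℓ n : ℕ} {s x : ℂ} (hs : s ≠ 0) (hx : x ≠ 0)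
    (hden : ∀ k ≤ n, qpoch (s ^ 2) (s ^ 2) k * qpoch (-1) (s ^ 2) k *
      qpoch (s * (s ^ 2) ^ (-(ℓ : ℤ))) (s ^ 2) k * qpoch (-s) (s ^ 2) k *
        qpoch ((s ^ 2) ^ (-(3 * n : ℤ))) (s ^ 2) k ≠ 0) :
    ContinuousAt (fun p : ℂ × ℂ => gosperLhs ℓ n (p.1 ^ 2) p.2 p.1) (s, x) := by
  have hzpow (m : ℤ) : ContinuousAt (fun p : ℂ × ℂ => (p.1 ^ 2) ^ m) (s, x) :=
    (continuousAt_fst.pow 2).zpow₀ m (.inl (pow_ne_zero 2 hs))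
  refine tendsto_finsetSum _ fun k hk => ContinuousAt.mul (ContinuousAt.div ?_ ?_
    (hden k (mem_range_succ_iff.1 hk))) (by fun_prop)
  · fun_prop (disch := assumption)
  · fun_prop

theorem continuousAt_gosperRhs {ℓ n : ℕ} {s x : ℂ} (hs : s ≠ 0) (hx : x ≠ 0) (hx1 : 1 + x ≠ 0)
    (hdenℓ : qpoch (s ^ 2 * x ^ 2) (s ^ 2) ℓ * qpoch s (s ^ 2) ℓ ≠ 0)
    (hdeni : ∀ i ≤ ℓ,
      qpoch (s ^ 2) (s ^ 2) i * qpoch (x ^ 2 * (s ^ 2) ^ (ℓ + 1)) (s ^ 2) i ≠ 0)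
    (hden2 : qpoch (s ^ 2) ((s ^ 2) ^ 3) n * qpoch ((s ^ 2) ^ 2) ((s ^ 2) ^ 3) n ≠ 0) :
    ContinuousAt (fun p : ℂ × ℂ => gosperRhs ℓ n (p.1 ^ 2) p.2 p.1) (s, x) := by
  have hzpow (m : ℤ) : ContinuousAt (fun p : ℂ × ℂ => (p.1 ^ 2) ^ m) (s, x) :=
    (continuousAt_fst.pow 2).zpow₀ m (.inl (pow_ne_zero 2 hs))
  have htwo : 2 * (1 + x) ≠ 0 := mul_ne_zero two_ne_zero hx1
  refine ContinuousAt.mul (by fun_prop (disch := assumption)) (tendsto_finsetSum _ fun i hi => ?_)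
  have hdeni := hdeni i (mem_range_succ_iff.1 hi)
  change ContinuousAt _ _
  fun_prop (disch := assumption)

theorem countable_setOf_pow_eq (c : ℂ) {m : ℕ} (hm : m ≠ 0) : {t : ℂ | t ^ m = c}.Countable := by
  refine ((Polynomial.nthRootsFinset m c).finite_toSet.subset fun t ht => ?_).countable
  exact (Polynomial.mem_nthRootsFinset hm.bot_lt _).2 ht

theorem frequently_isGeneric (s x : ℂ) :
    ∃ᶠ p : ℂ × ℂ in 𝓝 (s, x), IsGeneric (p.1 ^ 2) p.1 p.2 := by
  have hs : {s' : ℂ | s' = 0 ∨ IsOfFinOrder s'}.Countable := by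
    refine (Set.countable_singleton 0).union (Set.Countable.mono ?_ (Set.countable_iUnion
      fun m : ℕ => countable_setOf_pow_eq 1 m.succ_ne_zero))
    intro s' hs'
    obtain ⟨m, hm, hpow⟩ := isOfFinOrder_iff_pow_eq_one.1 hs'
    exact Set.mem_iUnion.2 ⟨m - 1, by rwa [Nat.succ_eq_add_one, Nat.sub_add_cancel hm]⟩
  have hx (q : ℂ) : {x' : ℂ | x' = 0 ∨ ∃ j : ℤ, x' ^ 2 * q ^ j = 1}.Countable :=
    (Set.countable_singleton 0).union <| Set.Countable.mono
      (fun _ ⟨j, hj⟩ => Set.mem_iUnion.2 ⟨j, eq_inv_of_mul_eq_one_left hj⟩)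
      (Set.countable_iUnion fun j : ℤ => countable_setOf_pow_eq (q ^ j)⁻¹ two_ne_zero)
  have hs_freq := mem_closure_iff_frequently.1 (hs.dense_compl ℝ s)
  have hx_freq (q : ℂ) := mem_closure_iff_frequently.1 ((hx q).dense_compl ℝ x)
  simp only [Set.mem_compl_iff, Set.mem_ofPred_eq, not_or, not_exists] at hs_freq hx_freq
  rw [nhds_prod_eq]
  refine Frequently.filter_mono ((frequently_curry_iff _).2 ?_) curry_le_prod
  exact hs_freq.mono fun s' hs' => (hx_freq (s' ^ 2)).mono fun x' hx' =>
    ⟨rfl, hs'.1, hx'.1, hs'.2, hx'.2⟩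

theorem q_gosper_related_extension (ℓ n : ℕ) (q x s : ℂ) (hs : s ^ 2 = q)
    (hq : q ≠ 0) (hx : x ≠ 0) (hx1 : 1 + x ≠ 0)
    (hden : ∀ k ≤ n,
      qpoch q q k * qpoch (-1) q k * qpoch (s * q ^ (-(ℓ : ℤ))) q k * qpoch (-s) q k *
        qpoch (q ^ (-(3*n : ℤ))) q k ≠ 0)
    (hdenℓ : qpoch (q * x^2) q ℓ * qpoch s q ℓ ≠ 0)
    (hdeni : ∀ i ≤ ℓ, qpoch q q i * qpoch (x^2 * q^(ℓ+1)) q i ≠ 0)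
    (hden2 : qpoch q (q^3) n * qpoch (q^2) (q^3) n ≠ 0) :
    ∑ k ∈ Finset.range (n+1),
      qpoch (q ^ (-(3*n : ℤ))) (q^3) k *
        (qpoch x q k * qpoch (q ^ (-(ℓ : ℤ)) / x) q k) /
        (qpoch q q k * qpoch (-1) q k * qpoch (s * q ^ (-(ℓ : ℤ))) q k * qpoch (-s) q k *
          qpoch (q ^ (-(3*n : ℤ))) q k) * q^k
      = (qpoch (q*x) q ℓ * qpoch (s*x) q ℓ) / (qpoch (q * x^2) q ℓ * qpoch s q ℓ) *
        ∑ i ∈ Finset.range (ℓ+1),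
          (q^(ℓ*i) * s^i) * ((1 + x * q^i) / (2 * (1 + x))) *
            (qpoch (q ^ (-(ℓ : ℤ))) q i * qpoch (x^2) q i) /
            (qpoch q q i * qpoch (x^2 * q^(ℓ+1)) q i) *
            ((qpoch (q^(1+i)*x) (q^3) n * qpoch (q ^ (2 - i : ℤ) / x) (q^3) n) /
                (qpoch q (q^3) n * qpoch (q^2) (q^3) n)
              + (qpoch (q^(2+i)*x) (q^3) n * qpoch (q ^ (1 - i : ℤ) / x) (q^3) n) /
                (qpoch q (q^3) n * qpoch (q^2) (q^3) n)) := by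
  subst hs
  have hs : s ≠ 0 := ne_zero_pow two_ne_zero hq
  exact tendsto_nhds_unique_of_frequently_eq (continuousAt_gosperLhs hs hx hden)
    (continuousAt_gosperRhs hs hx hx1 hdenℓ hdeni hden2)
    ((frequently_isGeneric s x).mono fun _ h => h.gosperLhs_eq_gosperRhs ℓ n)
end

section
/- For every nonnegative integer n and complex number x such that 1+6x != 0 and 2+6x != 0: sum over k from 0 to n of ((3x)_k (-1-3x)_k (-n)_k)/(k! (-1/2)_k (-3n)_k) * (3/4)^k equals ((1+3x)/2) * ((1/3+x)_n (2/3-x)_n)/((1/3)_n (2/3)_n) + (1/2) * ((2/3+x)_n (1/3-x)_n)/((1/3)_n (2/3)_n) - (3x/2) * ((1+x)_n (-x)_n)/((1/3)_n (2/3)_n). -/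
/-!
Since `(1/2)_k = (1 - 2k) (-1/2)_k`, a contiguous relation writes each summand as a combination of
summands of Gosper's strange series `₃F₂(a, 1 - a, -n; 1/2, -3n; 3/4)` at `a`, `a + 1` and `a + 2`,
where `a = 3x`. Gosper's series is summed by Zeilberger's method: with `t n k` its `k`-th term, the
difference `(3n + 1) (3n + 2) t (n + 1) k - (3n + 1 + a) (3n + 2 - a) t n k` telescopes in `k`
with certificate `(a + k) (1 - a + k) t n k`, which vanishes at `k = n + 1`.
-/

open Finset

local notation:max a:max "⁽" k "⁾" => Polynomial.eval a (ascPochhammer _ k)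

theorem poch_eq_eval_ascPochhammer (a : ℂ) (k : ℕ) : poch a k = a⁽k⁾ := by
  induction k with
  | zero => simp [poch]
  | succ k ih => rw [poch, prod_range_succ, ← poch, ih, ascPochhammer_succ_eval]

section CommRing

variable {R : Type*} [CommRing R]

theorem ascPochhammer_eval_succ_left (a : R) (k : ℕ) : a⁽k + 1⁾ = a * (a + 1)⁽k⁾ := by
  simp [ascPochhammer_succ_left]

theorem mul_ascPochhammer_eval_add_one (a : R) (k : ℕ) : a * (a + 1)⁽k⁾ = a⁽k⁾ * (a + k) := by
  rw [← ascPochhammer_eval_succ_left, ascPochhammer_succ_eval]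

theorem mul_ascPochhammer_eval_add_three (a : R) (k : ℕ) :
    a * (a + 1) * (a + 2) * (a + 3)⁽k⁾ = a⁽k⁾ * (a + k) * (a + k + 1) * (a + k + 2) := by
  have shift₀ := mul_ascPochhammer_eval_add_one a k
  have shift₁ := mul_ascPochhammer_eval_add_one (a + 1) k
  have shift₂ := mul_ascPochhammer_eval_add_one (a + 2) k
  rw [show a + 1 + 1 = a + 2 by ring] at shift₁
  rw [show a + 2 + 1 = a + 3 by ring] at shift₂
  linear_combination (a + k + 1) * (a + k + 2) * shift₀ + a * (a + k + 2) * shift₁ +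
    a * (a + 1) * shift₂

theorem ascPochhammer_eval_contiguous (a : R) (k : ℕ) :
    2 * (1 - 2 * k) * (a⁽k⁾ * (-1 - a)⁽k⁾) =
      (1 + a) * (a⁽k⁾ * (1 - a)⁽k⁾) + (a + 1)⁽k⁾ * (-a)⁽k⁾ - a * ((a + 2)⁽k⁾ * (-1 - a)⁽k⁾) := by
  cases k with
  | zero =>
    simp only [ascPochhammer_zero, Polynomial.eval_one, Nat.cast_zero]
    ring
  | succ j =>
    have shift_add := mul_ascPochhammer_eval_add_one (a + 1) (j + 1)
    have shift_neg := mul_ascPochhammer_eval_add_one (-a) (j + 1)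
    have left_a := ascPochhammer_eval_succ_left a j
    have left_neg := ascPochhammer_eval_succ_left (-1 - a) j
    rw [show a + 1 + 1 = a + 2 by ring, ascPochhammer_succ_eval j (a + 1)] at shift_add
    rw [show -a + 1 = 1 - a by ring, ascPochhammer_succ_eval j (-a)] at shift_neg
    rw [show -1 - a + 1 = -a by ring] at left_neg
    rw [left_a, left_neg, ascPochhammer_succ_eval j (a + 1), ascPochhammer_succ_eval j (-a)]
    push_cast at shift_add shift_neg ⊢
    linear_combination (1 + a) * (a + 1)⁽j⁾ * shift_neg - a * (-a)⁽j⁾ * shift_add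

end CommRing

section Field

variable {K : Type*} [Field K]

/-- The `k`-th term of the hypergeometric series `₃F₂(a, b, c; d, e; z)`. It is `0` by convention
when its denominator vanishes. -/
noncomputable def hypergeometricTerm (a b c d e z : K) (k : ℕ) : K :=
  (a⁽k⁾ * b⁽k⁾ * c⁽k⁾) / ((k.factorial : K) * d⁽k⁾ * e⁽k⁾) * z ^ k

theorem hypergeometricTerm_zero (a b c d e z : K) : hypergeometricTerm a b c d e z 0 = 1 := by
  simp [hypergeometricTerm]

theorem hypergeometricTerm_succ (a b c d e z : K) (k : ℕ) :
    hypergeometricTerm a b c d e z (k + 1) =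
      hypergeometricTerm a b c d e z k *
        ((a + k) * (b + k) * (c + k) / ((k + 1) * (d + k) * (e + k)) * z) := by
  simp only [hypergeometricTerm, ascPochhammer_succ_eval, Nat.factorial_succ, Nat.cast_mul,
    Nat.cast_succ, pow_succ, div_eq_mul_inv, mul_inv]
  ring

theorem hypergeometricTerm_succ_eq_shift (a b c d z : K) {e : K} {k : ℕ}
    (h₁ : e + k + 1 ≠ 0) (h₂ : e + k + 2 ≠ 0) :
    hypergeometricTerm a b c d e z (k + 1) =
      hypergeometricTerm a b (c + 1) d (e + 3) z k *
        ((a + k) * (b + k) * c * (e + k + 1) * (e + k + 2) /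
          ((k + 1) * (d + k) * (e * (e + 1) * (e + 2))) * z) := by
  have denominator : e⁽k + 1⁾ =
      e * (e + 1) * (e + 2) * (e + 3)⁽k⁾ / ((e + k + 1) * (e + k + 2)) := by
    rw [mul_ascPochhammer_eval_add_three, ascPochhammer_succ_eval]
    field_simp
  simp only [hypergeometricTerm, denominator, ascPochhammer_eval_succ_left c,
    ascPochhammer_succ_eval k a, ascPochhammer_succ_eval k b, ascPochhammer_succ_eval k d,
    Nat.factorial_succ, Nat.cast_mul, Nat.cast_succ, pow_succ, div_eq_mul_inv, mul_inv, inv_inv]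
  ring

/-- The `k`-th term of Gosper's strange series `₃F₂(a, 1 - a, -n; 1/2, -3n; 3/4)`. -/
noncomputable def gosperTerm (a : K) (n : ℕ) : ℕ → K :=
  hypergeometricTerm a (1 - a) (-n) (1 / 2) (-(3 * n)) (3 / 4)

theorem gosperTerm_zero (a : K) (n : ℕ) : gosperTerm a n 0 = 1 :=
  hypergeometricTerm_zero ..

theorem gosperTerm_self_succ (a : K) (n : ℕ) : gosperTerm a n (n + 1) = 0 := by
  simp [gosperTerm, hypergeometricTerm_succ]

variable [CharZero K]

theorem hypergeometricTerm_contiguous (a c e z : K) (k : ℕ) :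
    hypergeometricTerm a (-1 - a) c (-1 / 2) e z k =
      (1 + a) / 2 * hypergeometricTerm a (1 - a) c (1 / 2) e z k
        + 1 / 2 * hypergeometricTerm (a + 1) (-a) c (1 / 2) e z k
        - a / 2 * hypergeometricTerm (a + 2) (-1 - a) c (1 / 2) e z k := by
  have odd_ne_zero : (1 - 2 * k : K) ≠ 0 := by
    rw [sub_ne_zero]
    exact_mod_cast (by omega : 1 ≠ 2 * k)
  have half : (1 / 2 : K)⁽k⁾ = (-1 / 2 : K)⁽k⁾ * (1 - 2 * k) := by
    have shift := mul_ascPochhammer_eval_add_one (-1 / 2 : K) k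
    rw [show (-1 / 2 + 1 : K) = 1 / 2 by norm_num] at shift
    linear_combination -2 * shift
  have numerator : a⁽k⁾ * (-1 - a)⁽k⁾ =
      ((1 + a) * (a⁽k⁾ * (1 - a)⁽k⁾) + (a + 1)⁽k⁾ * (-a)⁽k⁾ - a * ((a + 2)⁽k⁾ * (-1 - a)⁽k⁾)) /
        (2 * (1 - 2 * k)) := by
    rw [← ascPochhammer_eval_contiguous]
    field_simp
  rw [hypergeometricTerm, numerator]
  simp only [hypergeometricTerm, half]
  simp only [div_eq_mul_inv, mul_inv]
  ring

theorem gosperTerm_succ_right (a : K) {n k : ℕ} (h : k ≤ n) :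
    2 * (k + 1) * (2 * k + 1) * (3 * n - k) * gosperTerm a n (k + 1) =
      3 * (a + k) * (1 - a + k) * (n - k) * gosperTerm a n k := by
  obtain rfl | h := h.eq_or_lt
  · simp [gosperTerm_self_succ]
  have hk : (k + 1 : K) ≠ 0 := k.cast_add_one_ne_zero
  have odd_ne_zero : (1 + 2 * k : K) ≠ 0 := by exact_mod_cast (by omega : 1 + 2 * k ≠ 0)
  have hn : (-(3 * n) + k : K) ≠ 0 := by
    rw [Ne, neg_add_eq_zero]
    exact_mod_cast (by omega : 3 * n ≠ k)
  rw [gosperTerm, hypergeometricTerm_succ]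
  field_simp
  ring

theorem gosperTerm_succ_succ (a : K) {n k : ℕ} (h : k ≤ n) :
    2 * (k + 1) * (2 * k + 1) * ((3 * n + 1) * (3 * n + 2)) * gosperTerm a (n + 1) (k + 1) =
      (a + k) * (1 - a + k) * (3 * n + 1 - k) * (3 * n + 2 - k) * gosperTerm a n k := by
  have ne₁ : (-(3 * (n + 1 : ℕ)) + k + 1 : K) ≠ 0 := by
    rw [add_assoc, Ne, neg_add_eq_zero]
    exact_mod_cast (by omega : 3 * (n + 1) ≠ k + 1)
  have ne₂ : (-(3 * (n + 1 : ℕ)) + k + 2 : K) ≠ 0 := by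
    rw [add_assoc, Ne, neg_add_eq_zero]
    exact_mod_cast (by omega : 3 * (n + 1) ≠ k + 2)
  have hk : (k + 1 : K) ≠ 0 := k.cast_add_one_ne_zero
  have hn : (n + 1 : K) ≠ 0 := n.cast_add_one_ne_zero
  have odd_ne_zero : (1 + 2 * k : K) ≠ 0 := by exact_mod_cast (by omega : 1 + 2 * k ≠ 0)
  have hn₁ : (3 * n + 1 : K) ≠ 0 := by exact_mod_cast (3 * n).succ_ne_zero
  have hn₂ : (3 * n + 2 : K) ≠ 0 := by exact_mod_cast (3 * n + 1).succ_ne_zero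
  rw [gosperTerm, hypergeometricTerm_succ_eq_shift _ _ _ _ _ ne₁ ne₂,
    show (-(n + 1 : ℕ) + 1 : K) = -n by push_cast; ring,
    show (-(3 * (n + 1 : ℕ)) + 3 : K) = -(3 * n) by push_cast; ring, ← gosperTerm]
  push_cast
  rw [show (-(3 * (n + 1)) + 1 : K) = -(3 * n + 2) by ring,
    show (-(3 * (n + 1)) + 2 : K) = -(3 * n + 1) by ring]
  field_simp
  ring

theorem gosperTerm_telescoping (a : K) {n k : ℕ} (h : k ≤ n) :
    (3 * n + 1) * (3 * n + 2) * gosperTerm a (n + 1) (k + 1)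
        - (3 * n + 1 + a) * (3 * n + 2 - a) * gosperTerm a n (k + 1) =
      (a + k) * (1 - a + k) * gosperTerm a n k
        - (a + (k + 1 : ℕ)) * (1 - a + (k + 1 : ℕ)) * gosperTerm a n (k + 1) := by
  have hk : (2 * (k + 1) * (2 * k + 1) : K) ≠ 0 := by
    exact_mod_cast (by positivity : 2 * (k + 1) * (2 * k + 1) ≠ 0)
  apply mul_left_cancel₀ hk
  push_cast
  linear_combination gosperTerm_succ_succ a h - (3 * n + k + 3) * gosperTerm_succ_right a h

theorem sum_gosperTerm_succ (a : K) (n : ℕ) :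
    (3 * n + 1) * (3 * n + 2) * ∑ k ∈ range (n + 2), gosperTerm a (n + 1) k =
      (3 * n + 1 + a) * (3 * n + 2 - a) * ∑ k ∈ range (n + 1), gosperTerm a n k := by
  have extend : ∑ k ∈ range (n + 2), gosperTerm a n k = ∑ k ∈ range (n + 1), gosperTerm a n k := by
    rw [sum_range_succ, gosperTerm_self_succ, add_zero]
  have telescope :
      (3 * n + 1) * (3 * n + 2) * ∑ k ∈ range (n + 1), gosperTerm a (n + 1) (k + 1)
          - (3 * n + 1 + a) * (3 * n + 2 - a) * ∑ k ∈ range (n + 1), gosperTerm a n (k + 1) =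
        a * (1 - a) := by
    rw [mul_sum, mul_sum, ← sum_sub_distrib,
      sum_congr rfl fun k hk ↦ gosperTerm_telescoping a (mem_range_succ_iff.1 hk),
      sum_range_sub' (fun k : ℕ ↦ (a + k) * (1 - a + k) * gosperTerm a n k)]
    simp [gosperTerm_zero, gosperTerm_self_succ]
  rw [← extend, sum_range_succ' (gosperTerm a (n + 1)), sum_range_succ' (gosperTerm a n),
    gosperTerm_zero, gosperTerm_zero]
  linear_combination telescope

theorem sum_gosperTerm (a : K) (n : ℕ) :
    ∑ k ∈ range (n + 1), gosperTerm a n k =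
      (((1 + a) / 3)⁽n⁾ * ((2 - a) / 3)⁽n⁾) / ((1 / 3)⁽n⁾ * (2 / 3)⁽n⁾) := by
  induction n with
  | zero => simp [gosperTerm_zero]
  | succ n ih =>
    have hn₁ : (3 * n + 1 : K) ≠ 0 := by exact_mod_cast (3 * n).succ_ne_zero
    have hn₂ : (3 * n + 2 : K) ≠ 0 := by exact_mod_cast (3 * n + 1).succ_ne_zero
    have ratio : ((1 + a) / 3 + n) * ((2 - a) / 3 + n) / ((1 / 3 + n) * (2 / 3 + n)) =
        (3 * n + 1 + a) * (3 * n + 2 - a) / ((3 * n + 1) * (3 * n + 2)) := by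
      rw [show (1 / 3 + n : K) = (3 * n + 1) / 3 by ring,
        show (2 / 3 + n : K) = (3 * n + 2) / 3 by ring]
      field_simp
      ring
    calc ∑ k ∈ range (n + 2), gosperTerm a (n + 1) k
        = (∑ k ∈ range (n + 1), gosperTerm a n k) *
            ((3 * n + 1 + a) * (3 * n + 2 - a) / ((3 * n + 1) * (3 * n + 2))) := by
          field_simp
          linear_combination sum_gosperTerm_succ a n
      _ = _ := by
          simp only [ih, ← ratio, ascPochhammer_succ_eval, div_eq_mul_inv, mul_inv]
          ring

theorem gosper_related_ell_one_general (n : ℕ) (x : K) :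
    ∑ k ∈ range (n + 1),
        hypergeometricTerm (3 * x) (-1 - 3 * x) (-n) (-1 / 2) (-(3 * n)) (3 / 4) k =
      (1 + 3 * x) / 2 * (((1 / 3 + x)⁽n⁾ * (2 / 3 - x)⁽n⁾) / ((1 / 3)⁽n⁾ * (2 / 3)⁽n⁾))
        + 1 / 2 * (((2 / 3 + x)⁽n⁾ * (1 / 3 - x)⁽n⁾) / ((1 / 3)⁽n⁾ * (2 / 3)⁽n⁾))
        - 3 * x / 2 * (((1 + x)⁽n⁾ * (-x)⁽n⁾) / ((1 / 3)⁽n⁾ * (2 / 3)⁽n⁾)) := by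
  have split (k : ℕ) :
      hypergeometricTerm (3 * x) (-1 - 3 * x) (-n) (-1 / 2) (-(3 * n)) (3 / 4) k =
        (1 + 3 * x) / 2 * gosperTerm (3 * x) n k + 1 / 2 * gosperTerm (3 * x + 1) n k
          - 3 * x / 2 * gosperTerm (3 * x + 2) n k := by
    rw [hypergeometricTerm_contiguous, gosperTerm, gosperTerm, gosperTerm,
      show 1 - (3 * x + 1) = -(3 * x) by ring, show 1 - (3 * x + 2) = -1 - 3 * x by ring]
  simp only [split, sum_sub_distrib, sum_add_distrib, ← mul_sum, sum_gosperTerm]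
  rw [show (1 + 3 * x) / 3 = 1 / 3 + x by ring, show (2 - 3 * x) / 3 = 2 / 3 - x by ring,
    show (1 + (3 * x + 1)) / 3 = 2 / 3 + x by ring, show (2 - (3 * x + 1)) / 3 = 1 / 3 - x by ring,
    show (1 + (3 * x + 2)) / 3 = 1 + x by ring, show (2 - (3 * x + 2)) / 3 = -x by ring]

end Field

theorem gosper_related_ell_one (n : ℕ) (x : ℂ)
    (h1 : 1 + 6*x ≠ 0) (h2 : 2 + 6*x ≠ 0) :
    ∑ k ∈ Finset.range (n+1),
      (poch (3*x) k * poch (-1 - 3*x) k * poch (-(n : ℂ)) k) /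
        ((Nat.factorial k : ℂ) * poch (-1/2) k * poch (-(3*n : ℂ)) k) * (3/4 : ℂ)^k
      = (1 + 3*x)/2 * ((poch (1/3 + x) n * poch (2/3 - x) n) / (poch (1/3) n * poch (2/3) n))
        + (1/2 : ℂ) * ((poch (2/3 + x) n * poch (1/3 - x) n) / (poch (1/3) n * poch (2/3) n))
        - 3*x/2 * ((poch (1 + x) n * poch (-x) n) / (poch (1/3) n * poch (2/3) n)) := by
  simp only [poch_eq_eval_ascPochhammer]
  exact gosper_related_ell_one_general n x
end
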